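/- Let f : ℝ² → ℝ be a bounded continuous function. Then there exists a function u ∈ 𝒞_M minimizing F(u) = ∫_Ω f(∇u(x)) dx in 𝒞_M which possesses the following property: whenever 𝒰 ⊆ int Ω is an open set on which u is C¹ and u > 0, the set graph(u|_𝒰) = {(x, u(x)) : x ∈ 𝒰} contains no extreme points of the epigraph epi(u). -/

import Mathlib

open Set MeasureTheory Pointwise

/-- The gradient of `u : ℝ² → ℝ` at `x`, represented as the pair of partial
derivatives (junk value `(0,0)` where `u` is not differentiable). -/
noncomputable def grad2 (u : ℝ × ℝ → ℝ) (x : ℝ × ℝ) : ℝ × ℝ :=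
  (fderiv ℝ u x (1, 0), fderiv ℝ u x (0, 1))

/-- Second derivative of `f : ℝ² → ℝ` at `ξ` in directions `v`, `w`. -/
noncomputable def hess2 (f : ℝ × ℝ → ℝ) (ξ v w : ℝ × ℝ) : ℝ :=
  fderiv ℝ (fun y => fderiv ℝ f y v) ξ w

/-- Determinant of the Hessian matrix of `f : ℝ² → ℝ` at `ξ`. -/
noncomputable def hessDet (f : ℝ × ℝ → ℝ) (ξ : ℝ × ℝ) : ℝ :=
  hess2 f ξ (1, 0) (1, 0) * hess2 f ξ (0, 1) (0, 1)
    - hess2 f ξ (1, 0) (0, 1) * hess2 f ξ (0, 1) (1, 0)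

/-- The Hessian matrix of `f` at `ξ` has a negative eigenvalue. -/
def HasNegEigenvalue (f : ℝ × ℝ → ℝ) (ξ : ℝ × ℝ) : Prop :=
  ∃ μ : ℝ, μ < 0 ∧ ∃ v : ℝ × ℝ, v ≠ 0 ∧
    (hess2 f ξ (1, 0) (1, 0) * v.1 + hess2 f ξ (1, 0) (0, 1) * v.2,
     hess2 f ξ (0, 1) (1, 0) * v.1 + hess2 f ξ (0, 1) (0, 1) * v.2) = μ • v

/-- The functional `F(u) = ∫_Ω f(∇u(x)) dx`. -/
noncomputable def NF (f : ℝ × ℝ → ℝ) (Ω : Set (ℝ × ℝ)) (u : ℝ × ℝ → ℝ) : ℝ :=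
  ∫ x in Ω, f (grad2 u x)

/-- Membership in the class `𝒞_M` of convex functions on `Ω` with `0 ≤ u ≤ M`. -/
def MemCM (Ω : Set (ℝ × ℝ)) (M : ℝ) (u : ℝ × ℝ → ℝ) : Prop :=
  ConvexOn ℝ Ω u ∧ ∀ x ∈ Ω, 0 ≤ u x ∧ u x ≤ M

/-- `u` minimizes `F` in the class `𝒞_M`. -/
def Minimizes (f : ℝ × ℝ → ℝ) (Ω : Set (ℝ × ℝ)) (M : ℝ) (u : ℝ × ℝ → ℝ) : Prop :=
  MemCM Ω M u ∧ ∀ v : ℝ × ℝ → ℝ, MemCM Ω M v → NF f Ω u ≤ NF f Ω v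

/-- Epigraph of `u` over `Ω`, as a subset of `ℝ³ = (ℝ × ℝ) × ℝ`. -/
def epi (Ω : Set (ℝ × ℝ)) (u : ℝ × ℝ → ℝ) : Set ((ℝ × ℝ) × ℝ) :=
  {p | p.1 ∈ Ω ∧ u p.1 ≤ p.2}

/-- Euclidean scalar product on `ℝ³ = (ℝ × ℝ) × ℝ`. -/
def dot3 (n r : (ℝ × ℝ) × ℝ) : ℝ := n.1.1 * r.1.1 + n.1.2 * r.1.2 + n.2 * r.2

/-- `n` is an outward unit normal to the convex set `C` at `r`. -/
def IsOutwardNormal (C : Set ((ℝ × ℝ) × ℝ)) (r n : (ℝ × ℝ) × ℝ) : Prop :=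
  dot3 n n = 1 ∧ ∀ y ∈ C, dot3 n (y - r) ≤ 0

/-- `r` is a singular boundary point of `C`: a frontier point with at least two
distinct outward unit normals. -/
def IsSingularPt (C : Set ((ℝ × ℝ) × ℝ)) (r : (ℝ × ℝ) × ℝ) : Prop :=
  r ∈ frontier C ∧ ∃ n₁ n₂ : (ℝ × ℝ) × ℝ, n₁ ≠ n₂ ∧
    IsOutwardNormal C r n₁ ∧ IsOutwardNormal C r n₂

/-- Epigraph of a one-variable function over `[a, b]`. -/
def epi1 (a b : ℝ) (u : ℝ → ℝ) : Set (ℝ × ℝ) :=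
  {p | p.1 ∈ Set.Icc a b ∧ u p.1 ≤ p.2}

/-- The one-dimensional functional `F(v) = ∫_a^b f(v'(x)) dx`. -/
noncomputable def NF1 (f : ℝ → ℝ) (a b : ℝ) (v : ℝ → ℝ) : ℝ :=
  ∫ x in a..b, f (deriv v x)

/-- The face of a convex set `K ⊂ ℝ³` in direction `n`. -/
def face3 (K : Set ((ℝ × ℝ) × ℝ)) (n : (ℝ × ℝ) × ℝ) : Set ((ℝ × ℝ) × ℝ) :=
  {r | r ∈ K ∧ ∀ ρ ∈ K, dot3 n ρ ≤ dot3 n r}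

/-!
Among the minimizers of `F` choose `u` with the least integral `∫_Ω u`. If the graph of `u` over `𝒰`
contained an extreme point of the epigraph, then a nearby point of `𝒰` would be strictly supported:
some affine function touches `u` there and nowhere else. Put the origin slightly below the graph at
that point and *stretch the nose*: replace `epi u` by the set of all `t • P` with `P ∈ epi u` and
`0 < t ≤ 1`. This changes `u` only near the chosen point, and there the gradient of the new
function is constant along rays.

The homothetic dilates `max (u x) (k * u (x / k))` with `k > 1` are admissible, hence have at least
the energy of `u`. As `k → 1`, the continuity of the gradient of `u` and the scaling of the domain
of change turn this into the statement that stretching the nose does not increase `F`. As it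
strictly decreases the integral, it contradicts the choice of `u`.
-/

section

open Filter Topology Metric

section ConvexDerivative

variable {E : Type*} [NormedAddCommGroup E] [NormedSpace ℝ E] {Ω : Set E} {u v : E → ℝ} {x y : E}

lemma fderiv_eq_of_eventually_le (hu : DifferentiableAt ℝ u x) (hv : DifferentiableAt ℝ v x)
    (hle : ∀ᶠ y in 𝓝 x, u y ≤ v y) (heq : u x = v x) : fderiv ℝ u x = fderiv ℝ v x := by
  have hmin : IsLocalMin (fun y => v y - u y) x := by
    filter_upwards [hle] with y hy
    linarith
  have hzero := hmin.fderiv_eq_zero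
  rw [fderiv_fun_sub hv hu] at hzero
  exact (sub_eq_zero.1 hzero).symm

lemma add_fderiv_le_of_convexOn (hu : ConvexOn ℝ Ω u) (hx : x ∈ Ω) (hy : y ∈ Ω)
    (hd : DifferentiableAt ℝ u x) : u x + fderiv ℝ u x (y - x) ≤ u y := by
  have hderiv : HasDerivAt (u ∘ AffineMap.lineMap x y) (fderiv ℝ u x (y - x)) (0 : ℝ) := by
    have hd0 : DifferentiableAt ℝ u (AffineMap.lineMap x y (0 : ℝ)) := by simpa using hd
    simpa using hd0.hasFDerivAt.comp_hasDerivAt (0 : ℝ) AffineMap.hasDerivAt_lineMap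
  have hconv := hu.comp_affineMap (AffineMap.lineMap x y : ℝ →ᵃ[ℝ] E)
  have hslope := hconv.le_slope_of_hasDerivAt (by simpa using hx) (by simpa using hy)
    zero_lt_one hderiv
  simp only [slope_def_field, Function.comp_apply, AffineMap.lineMap_apply_one,
    AffineMap.lineMap_apply_zero, sub_zero, div_one] at hslope
  linarith

lemma eventually_fderiv_apply_lt {u : ℕ → E → ℝ} (hx : x ∈ interior Ω)
    (hu : ∀ n, ConvexOn ℝ Ω (u n)) (hud : ∀ n, DifferentiableAt ℝ (u n) x)
    (hvd : DifferentiableAt ℝ v x)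
    (hlim : ∀ y ∈ interior Ω, Tendsto (fun n => u n y) atTop (𝓝 (v y)))
    (e : E) {c : ℝ} (hc : fderiv ℝ v x e < c) : ∀ᶠ n in atTop, fderiv ℝ (u n) x e < c := by
  have hslope := (hvd.hasFDerivAt.hasLineDerivAt e).tendsto_slope_zero_right
  have hmem : ∀ᶠ t in 𝓝[>] (0 : ℝ), x + t • e ∈ interior Ω := by
    have hcont : ContinuousAt (fun t : ℝ => x + t • e) 0 := by fun_prop
    exact hcont.continuousWithinAt.eventually_mem (by simpa using isOpen_interior.mem_nhds hx)
  obtain ⟨t, ⟨ht_lt, ht_mem⟩, ht_pos⟩ :=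
    (((hslope.eventually_lt_const hc).and hmem).and self_mem_nhdsWithin).exists
  have hquot : Tendsto (fun n => t⁻¹ • (u n (x + t • e) - u n x)) atTop
      (𝓝 (t⁻¹ • (v (x + t • e) - v x))) := ((hlim _ ht_mem).sub (hlim _ hx)).const_smul _
  filter_upwards [hquot.eventually_lt_const ht_lt] with n hn
  refine lt_of_le_of_lt ?_ hn
  have htangent := add_fderiv_le_of_convexOn (hu n) (interior_subset hx) (interior_subset ht_mem)
    (hud n)
  rw [add_sub_cancel_left, map_smul, smul_eq_mul] at htangent
  rw [smul_eq_mul, inv_mul_eq_div, le_div_iff₀ (mem_Ioi.1 ht_pos)]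
  linarith

variable [FiniteDimensional ℝ E]

lemma tendsto_clm_of_tendsto_apply {ι : Type*} {l : Filter ι} {T : ι → E →L[ℝ] ℝ}
    {S : E →L[ℝ] ℝ} (h : ∀ e, Tendsto (fun i => T i e) l (𝓝 (S e))) : Tendsto T l (𝓝 S) := by
  let e := (Module.finBasis ℝ E).equivFunL.arrowCongr (.refl ℝ ℝ) |>.trans
    (ContinuousLinearEquiv.piRing (Fin (Module.finrank ℝ E)))
  rw [e.toHomeomorph.isInducing.tendsto_nhds_iff]
  exact tendsto_pi_nhds.2 fun i => h _

lemma tendsto_fderiv_of_convexOn {u : ℕ → E → ℝ} (hx : x ∈ interior Ω)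
    (hu : ∀ n, ConvexOn ℝ Ω (u n)) (hud : ∀ n, DifferentiableAt ℝ (u n) x)
    (hvd : DifferentiableAt ℝ v x)
    (hlim : ∀ y ∈ interior Ω, Tendsto (fun n => u n y) atTop (𝓝 (v y))) :
    Tendsto (fun n => fderiv ℝ (u n) x) atTop (𝓝 (fderiv ℝ v x)) := by
  refine tendsto_clm_of_tendsto_apply fun e => tendsto_order.2 ⟨fun c hc => ?_, fun c hc =>
    eventually_fderiv_apply_lt hx hu hud hvd hlim e hc⟩
  have hneg : fderiv ℝ v x (-e) < -c := by rw [map_neg]; exact neg_lt_neg hc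
  filter_upwards [eventually_fderiv_apply_lt hx hu hud hvd hlim (-e) hneg] with n hn
  rw [map_neg] at hn
  exact neg_lt_neg_iff.1 hn

variable [MeasurableSpace E] [BorelSpace E] (μ : Measure E) [μ.IsAddHaarMeasure]

lemma ae_mem_interior_of_convex (hΩ : Convex ℝ Ω) : ∀ᵐ x ∂μ, x ∈ Ω → x ∈ interior Ω := by
  filter_upwards [measure_eq_zero_iff_ae_notMem.1 (hΩ.addHaar_frontier μ)] with x hx hxΩ
  by_contra hxi
  exact hx ⟨subset_closure hxΩ, hxi⟩

lemma ae_differentiableAt_of_convexOn (hu : ConvexOn ℝ Ω u) :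
    ∀ᵐ x ∂μ, x ∈ Ω → DifferentiableAt ℝ u x := by
  have hloc : ∀ x ∈ interior Ω, ∃ t ∈ 𝓝[interior Ω] x,
      μ (t ∩ {y | ¬ DifferentiableAt ℝ u y}) = 0 := by
    intro x hx
    obtain ⟨K, t, ht, hK⟩ := hu.locallyLipschitzOn_interior hx
    rw [isOpen_interior.nhdsWithin_eq hx] at ht ⊢
    refine ⟨interior t, interior_mem_nhds.2 ht, measure_eq_zero_iff_ae_notMem.2 ?_⟩
    filter_upwards [(hK.mono interior_subset).ae_differentiableWithinAt_of_mem (μ := μ)]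
      with y hy hyt
    exact hyt.2 ((hy hyt.1).differentiableAt (isOpen_interior.mem_nhds hyt.1))
  have hnull : μ (interior Ω ∩ {y | ¬ DifferentiableAt ℝ u y}) = 0 := by
    refine measure_null_of_locally_null _ fun x hx => ?_
    obtain ⟨t, ht, htnull⟩ := hloc x hx.1
    exact ⟨_, inter_mem (nhdsWithin_mono _ inter_subset_left ht)
      (mem_of_superset self_mem_nhdsWithin inter_subset_right), htnull⟩
  filter_upwards [ae_mem_interior_of_convex μ hu.1, measure_eq_zero_iff_ae_notMem.1 hnull]
    with x hxi hx hxΩ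
  by_contra hxd
  exact hx ⟨hxi hxΩ, hxd⟩

end ConvexDerivative

section Compactness

variable {E : Type*} [NormedAddCommGroup E] [NormedSpace ℝ E] {Ω : Set E} {a b : ℝ}

/-- The class of convex functions on `Ω` with values in `[a, b]`; nothing is required off `Ω`. The
class `𝒞_M` is `convexBetween Ω 0 M`. -/
def convexBetween (Ω : Set E) (a b : ℝ) : Set (E → ℝ) :=
  {u | ConvexOn ℝ Ω u ∧ ∀ x ∈ Ω, u x ∈ Icc a b}

lemma isClosed_convexOn (hΩ : Convex ℝ Ω) : IsClosed {u : E → ℝ | ConvexOn ℝ Ω u} := by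
  simp only [ConvexOn, hΩ, true_and, ofPred_forall]
  refine isClosed_iInter fun x => isClosed_iInter fun _ => isClosed_iInter fun y =>
    isClosed_iInter fun _ => isClosed_iInter fun s => isClosed_iInter fun t => ?_
  refine isClosed_iInter fun _ => isClosed_iInter fun _ => isClosed_iInter fun _ => ?_
  exact isClosed_le (by fun_prop) (by fun_prop)

lemma convexBetween_congr {u v : E → ℝ} (hu : u ∈ convexBetween Ω a b) (h : EqOn u v Ω) :
    v ∈ convexBetween Ω a b :=
  ⟨hu.1.congr h, fun x hx => h hx ▸ hu.2 x hx⟩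

lemma isCompact_convexBetween_inter_pi (hΩ : Convex ℝ Ω) :
    IsCompact (convexBetween Ω a b ∩ univ.pi fun _ => Icc a b) := by
  have hclosed : IsClosed (convexBetween Ω a b) := by
    exact (isClosed_convexOn hΩ).inter (isClosed_set_pi fun _ _ => isClosed_Icc)
  exact (isCompact_univ_pi fun _ => isCompact_Icc).inter_left hclosed

/-- Only countably many points are controlled: the product topology on `E → ℝ` is not
first-countable. -/
lemma exists_subseq_tendsto_on_countable (hΩ : Convex ℝ Ω) (hab : a ≤ b) {u : ℕ → E → ℝ}
    (hu : ∀ n, u n ∈ convexBetween Ω a b) (d : ℕ → E) :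
    ∃ v ∈ convexBetween Ω a b, ∃ φ : ℕ → ℕ, StrictMono φ ∧
      ∀ i, d i ∈ Ω → Tendsto (fun n => u (φ n) (d i)) atTop (𝓝 (v (d i))) := by
  classical
  let w : ℕ → E → ℝ := fun n => Ω.piecewise (u n) fun _ => a
  have hw : ∀ n, w n ∈ convexBetween Ω a b ∩ univ.pi fun _ => Icc a b := by
    refine fun n => ⟨convexBetween_congr (hu n) fun x hx => (piecewise_eq_of_mem _ _ _ hx).symm,
      fun x _ => ?_⟩
    by_cases hx : x ∈ Ω
    · simpa only [w, piecewise_eq_of_mem _ _ _ hx] using (hu n).2 x hx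
    · simpa only [w, piecewise_eq_of_notMem _ _ _ hx] using left_mem_Icc.2 hab
  obtain ⟨v, hv, hcluster⟩ := (isCompact_convexBetween_inter_pi hΩ).exists_mapClusterPt
    (tendsto_principal.2 (Eventually.of_forall hw) : map w atTop ≤ _)
  have hrestrict : Continuous fun (f : E → ℝ) i => f (d i) := by fun_prop
  obtain ⟨φ, hφ, hlim⟩ := MapClusterPt.tendsto_subseq
    (hcluster.continuousAt_comp hrestrict.continuousAt)
  refine ⟨v, hv.1, φ, hφ, fun i hi => ?_⟩
  simpa only [Function.comp_def, w, piecewise_eq_of_mem _ _ _ hi] using tendsto_pi_nhds.1 hlim i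

lemma equicontinuousAt_of_convexBetween {ι : Type*} {u : ι → E → ℝ}
    (hu : ∀ i, u i ∈ convexBetween Ω a b) {x : E} (hx : x ∈ interior Ω) :
    EquicontinuousAt u x := by
  obtain ⟨r, hr, hball⟩ := Metric.isOpen_iff.1 isOpen_interior x hx
  have hlip : ∀ i, LipschitzOnWith (2 * max |a| |b| / (r / 2)).toNNReal (u i)
      (ball x (r - r / 2)) := fun i =>
    ((hu i).1.subset (hball.trans interior_subset) (convex_ball _ _)).lipschitzOnWith_of_abs_le
      (half_pos hr) fun y hy =>
        have hmem := (hu i).2 y (interior_subset (hball hy))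
        abs_le_max_abs_abs hmem.1 hmem.2
  have hxball : x ∈ ball x (r - r / 2) := mem_ball_self (by linarith)
  have hequi := (LipschitzOnWith.uniformEquicontinuousOn u _ hlip).equicontinuousOn x hxball
  rwa [EquicontinuousWithinAt, isOpen_ball.nhdsWithin_eq hxball] at hequi

theorem exists_subseq_tendsto_of_convexBetween [FiniteDimensional ℝ E] (hΩ : Convex ℝ Ω)
    (hab : a ≤ b) {u : ℕ → E → ℝ} (hu : ∀ n, u n ∈ convexBetween Ω a b) :
    ∃ v ∈ convexBetween Ω a b, ∃ φ : ℕ → ℕ, StrictMono φ ∧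
      ∀ x ∈ interior Ω, Tendsto (fun n => u (φ n) x) atTop (𝓝 (v x)) := by
  have : ProperSpace E := FiniteDimensional.proper_real E
  obtain ⟨v, hv, φ, hφ, hlim⟩ := exists_subseq_tendsto_on_countable hΩ hab hu
    (TopologicalSpace.denseSeq E)
  refine ⟨v, hv, φ, hφ, fun x hx => ?_⟩
  have hvcont : ContinuousAt v x :=
    hv.1.continuousOn_interior.continuousAt (isOpen_interior.mem_nhds hx)
  refine (equicontinuousAt_of_convexBetween (fun n => hu (φ n)) hx).tendsto_of_mem_closure
    (hvcont.mono_left nhdsWithin_le_nhds)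
    (s := interior Ω ∩ range (TopologicalSpace.denseSeq E)) ?_
    ((TopologicalSpace.denseRange_denseSeq E).open_subset_closure_inter isOpen_interior hx)
  rintro _ ⟨hy, i, rfl⟩
  exact hlim i (interior_subset hy)

end Compactness

section Minimizer

lemma exists_forall_toLex_le {α β : Type*} [LinearOrder α] [LinearOrder β] [TopologicalSpace α]
    [TopologicalSpace β] [OrderClosedTopology α] [OrderClosedTopology β] {K : Set (α × β)}
    (hK : IsCompact K) (hne : K.Nonempty) : ∃ p ∈ K, ∀ q ∈ K, toLex p ≤ toLex q := by
  obtain ⟨p₀, hp₀, hmin₀⟩ := hK.exists_isMinOn hne continuous_fst.continuousOn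
  have hfibre : IsCompact (K ∩ Prod.fst ⁻¹' {p₀.1}) :=
    hK.inter_right (isClosed_singleton.preimage continuous_fst)
  obtain ⟨p, hp, hmin⟩ := hfibre.exists_isMinOn ⟨p₀, hp₀, rfl⟩ continuous_snd.continuousOn
  refine ⟨p, hp.1, fun q hq => Prod.Lex.toLex_le_toLex.2 ?_⟩
  have hp₁ : p.1 = p₀.1 := hp.2
  rcases (hmin₀ hq : p₀.1 ≤ q.1).lt_or_eq with hlt | heq
  · exact .inl (hp₁ ▸ hlt)
  · exact .inr ⟨hp₁.trans heq, hmin ⟨hq, heq.symm⟩⟩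

variable {E : Type*} [NormedAddCommGroup E] [NormedSpace ℝ E] [MeasurableSpace E]
  {μ : Measure E} {Ω : Set E} {a b : ℝ} {g : (E →L[ℝ] ℝ) → ℝ} {K : ℝ}

/-- The functional `u ↦ ∫_Ω g(∇u) dμ`, with the derivative `fderiv ℝ u x` in the role of the
gradient. Points where `u` is not differentiable contribute `g 0`; for convex `u` they form a null
set. -/
noncomputable def gradIntegral (μ : Measure E) (g : (E →L[ℝ] ℝ) → ℝ) (Ω : Set E) (u : E → ℝ) : ℝ :=
  ∫ x in Ω, g (fderiv ℝ u x) ∂μ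

/-- The functional `u ↦ ∫_Ω g(∇u) dμ` with ties broken by `∫_Ω u dμ`. Among the minimizers of the
former, those of `lexEnergy` leave no room for stretching a nose. -/
noncomputable def lexEnergy (μ : Measure E) (g : (E →L[ℝ] ℝ) → ℝ) (Ω : Set E) (u : E → ℝ) :
    ℝ ×ₗ ℝ :=
  toLex (gradIntegral μ g Ω u, ∫ x in Ω, u x ∂μ)

variable [BorelSpace E]

lemma measurable_comp_fderiv (hg : Continuous g) (u : E → ℝ) :
    Measurable fun x => g (fderiv ℝ u x) :=
  hg.measurable.comp (measurable_fderiv ℝ u)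

lemma integrableOn_comp_fderiv (hg : Continuous g) (hK : ∀ ξ, |g ξ| ≤ K) (u : E → ℝ) {s : Set E}
    (hs : μ s < ⊤) : IntegrableOn (fun x => g (fderiv ℝ u x)) s μ :=
  .of_bound hs (measurable_comp_fderiv hg u).aestronglyMeasurable K (.of_forall fun _ => hK _)

lemma ae_norm_le_of_mem_convexBetween (hΩ : IsCompact Ω) {u : E → ℝ}
    (hu : u ∈ convexBetween Ω a b) :
    ∀ᵐ x ∂μ.restrict Ω, ‖u x‖ ≤ max |a| |b| :=
  (ae_restrict_iff' hΩ.measurableSet).2 (.of_forall fun x hx =>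
    abs_le_max_abs_abs (hu.2 x hx).1 (hu.2 x hx).2)

variable [FiniteDimensional ℝ E] [μ.IsAddHaarMeasure]

lemma aestronglyMeasurable_of_convexOn {u : E → ℝ} (hu : ConvexOn ℝ Ω u) :
    AEStronglyMeasurable u (μ.restrict Ω) := by
  have hae : Ω =ᵐ[μ] interior Ω :=
    EventuallyLE.antisymm (ae_mem_interior_of_convex μ hu.1)
      (.of_forall fun _ hx => interior_subset hx)
  rw [Measure.restrict_congr_set hae]
  exact hu.continuousOn_interior.aestronglyMeasurable isOpen_interior.measurableSet

lemma integrableOn_of_mem_convexBetween (hΩ : IsCompact Ω) {u : E → ℝ}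
    (hu : u ∈ convexBetween Ω a b) : IntegrableOn u Ω μ :=
  .of_bound hΩ.measure_lt_top (aestronglyMeasurable_of_convexOn hu.1) _
    (ae_norm_le_of_mem_convexBetween hΩ hu)

lemma tendsto_integral_of_convexBetween (hΩ : IsCompact Ω) {u : ℕ → E → ℝ} {v : E → ℝ}
    (hu : ∀ n, u n ∈ convexBetween Ω a b)
    (hlim : ∀ x ∈ interior Ω, Tendsto (fun n => u n x) atTop (𝓝 (v x))) :
    Tendsto (fun n => ∫ x in Ω, u n x ∂μ) atTop (𝓝 (∫ x in Ω, v x ∂μ)) := by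
  have := isFiniteMeasure_restrict.2 (hΩ.measure_lt_top (μ := μ)).ne
  refine tendsto_integral_of_dominated_convergence _
    (fun n => aestronglyMeasurable_of_convexOn (hu n).1) (integrable_const (max |a| |b|))
    (fun n => ae_norm_le_of_mem_convexBetween hΩ (hu n)) ((ae_restrict_iff' hΩ.measurableSet).2 ?_)
  filter_upwards [ae_mem_interior_of_convex μ (hu 0).1.1] with x hxi hx
  exact hlim x (hxi hx)

lemma tendsto_gradIntegral_of_convexOn (hΩ : IsCompact Ω) (hg : Continuous g)
    (hK : ∀ ξ, |g ξ| ≤ K) {u : ℕ → E → ℝ} {v : E → ℝ} (hu : ∀ n, ConvexOn ℝ Ω (u n))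
    (hv : ConvexOn ℝ Ω v)
    (hlim : ∀ x ∈ interior Ω, Tendsto (fun n => u n x) atTop (𝓝 (v x))) :
    Tendsto (fun n => gradIntegral μ g Ω (u n)) atTop (𝓝 (gradIntegral μ g Ω v)) := by
  have := isFiniteMeasure_restrict.2 (hΩ.measure_lt_top (μ := μ)).ne
  refine tendsto_integral_of_dominated_convergence _
    (fun n => (measurable_comp_fderiv hg _).aestronglyMeasurable) (integrable_const K)
    (fun n => .of_forall fun _ => hK _) ((ae_restrict_iff' hΩ.measurableSet).2 ?_)
  filter_upwards [ae_all_iff.2 fun n => ae_differentiableAt_of_convexOn μ (hu n),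
    ae_differentiableAt_of_convexOn μ hv, ae_mem_interior_of_convex μ hv.1] with x hud hvd hxi hx
  exact (hg.tendsto _).comp
    (tendsto_fderiv_of_convexOn (hxi hx) hu (fun n => hud n hx) (hvd hx) hlim)

lemma isCompact_image_gradIntegral_integral (hΩ : IsCompact Ω) (hΩconv : Convex ℝ Ω) (hab : a ≤ b)
    (hg : Continuous g) (hK : ∀ ξ, |g ξ| ≤ K) :
    IsCompact ((fun u : E → ℝ => (gradIntegral μ g Ω u, ∫ x in Ω, u x ∂μ)) ''
      convexBetween Ω a b) := by
  refine IsSeqCompact.isCompact fun p hp => ?_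
  choose u hu hup using hp
  obtain ⟨v, hv, φ, hφ, hlim⟩ := exists_subseq_tendsto_of_convexBetween hΩconv hab hu
  refine ⟨_, mem_image_of_mem _ hv, φ, hφ, ?_⟩
  simp only [Function.comp_def, ← hup]
  exact (tendsto_gradIntegral_of_convexOn hΩ hg hK (fun n => (hu (φ n)).1) hv.1 hlim).prodMk_nhds
    (tendsto_integral_of_convexBetween hΩ (fun n => hu (φ n)) hlim)

theorem exists_isMinOn_lexEnergy (hΩ : IsCompact Ω) (hΩconv : Convex ℝ Ω)
    (hab : a ≤ b) (hg : Continuous g) (hK : ∀ ξ, |g ξ| ≤ K) :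
    ∃ u ∈ convexBetween Ω a b, IsMinOn (lexEnergy μ g Ω) (convexBetween Ω a b) u := by
  have hne : (convexBetween Ω a b).Nonempty :=
    ⟨fun _ => a, convexOn_const _ hΩconv, fun _ _ => left_mem_Icc.2 hab⟩
  obtain ⟨_, ⟨u, hu, rfl⟩, hmin⟩ := exists_forall_toLex_le
    (isCompact_image_gradIntegral_integral (μ := μ) hΩ hΩconv hab hg hK) (hne.image _)
  exact ⟨u, hu, fun v hv => hmin _ (mem_image_of_mem _ hv)⟩

end Minimizer

section StrictSupport

variable {E : Type*} [NormedAddCommGroup E] [NormedSpace ℝ E] {Ω : Set E} {u : E → ℝ}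

lemma lt_of_eventually_lt_of_convexOn (hu : ConvexOn ℝ Ω u) {x : E} (hx : x ∈ Ω) {l : E →L[ℝ] ℝ}
    (hlt : ∀ᶠ y in 𝓝[≠] x, u x + l (y - x) < u y) {y : E} (hy : y ∈ Ω) (hyx : y ≠ x) :
    u x + l (y - x) < u y := by
  have hpath : Tendsto (fun t : ℝ => AffineMap.lineMap x y t) (𝓝[>] 0) (𝓝[≠] x) := by
    refine tendsto_nhdsWithin_iff.2 ⟨?_, ?_⟩
    · have hcont : Continuous fun t : ℝ => AffineMap.lineMap x y t := by fun_prop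
      simpa using hcont.continuousAt.tendsto.mono_left (nhdsWithin_le_nhds (a := (0 : ℝ)))
    · filter_upwards [self_mem_nhdsWithin] with t ht
      simpa [AffineMap.lineMap_eq_left_iff, hyx.symm] using (mem_Ioi.1 ht).ne'
  obtain ⟨t, ⟨htlt, ht1⟩, ht0⟩ := (((hpath.eventually hlt).and
    (mem_nhdsWithin_of_mem_nhds (Iio_mem_nhds zero_lt_one))).and self_mem_nhdsWithin).exists
  have hconv := hu.2 hx hy (sub_nonneg.2 (mem_Iio.1 ht1).le) (mem_Ioi.1 ht0).le
    (sub_add_cancel 1 t)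
  rw [← AffineMap.lineMap_apply_module, smul_eq_mul, smul_eq_mul] at hconv
  rw [AffineMap.lineMap_apply, vsub_eq_sub, vadd_eq_add, add_sub_cancel_right, map_smul,
    smul_eq_mul] at htlt
  have hscaled : t * (u x + l (y - x)) < t * u y := by
    rw [AffineMap.lineMap_apply, vsub_eq_sub, vadd_eq_add] at hconv
    linarith
  exact lt_of_mul_lt_mul_left hscaled (mem_Ioi.1 ht0).le

lemma convexHull_graphOn_subset_epigraph {s : Set E} (hu : ConvexOn ℝ Ω u) (hs : s ⊆ Ω) :
    convexHull ℝ (s.graphOn u) ⊆ {p : E × ℝ | p.1 ∈ Ω ∧ u p.1 ≤ p.2} :=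
  convexHull_min (image_subset_iff.2 fun _ hy => ⟨hs hy, le_rfl⟩) hu.convex_epigraph

lemma notMem_convexHull_graphOn {s : Set E} {x₀ : E} (hu : ConvexOn ℝ Ω u) (hs : s ⊆ Ω)
    (hx₀ : x₀ ∉ s)
    (hext : (x₀, u x₀) ∈ extremePoints ℝ {p : E × ℝ | p.1 ∈ Ω ∧ u p.1 ≤ p.2}) :
    (x₀, u x₀) ∉ convexHull ℝ (s.graphOn u) := by
  intro hmem
  have hgraph := extremePoints_convexHull_subset (inter_extremePoints_subset_extremePoints_of_subset
    (convexHull_graphOn_subset_epigraph hu hs) ⟨hmem, hext⟩)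
  exact hx₀ (mem_graphOn.1 hgraph).1

lemma exists_add_clm_lt_of_isMinOn_sub_sq {F : Type*} [NormedAddCommGroup F]
    [InnerProductSpace ℝ F] {T : E →L[ℝ] F} (hT : Function.Injective T) {B : Set E}
    {m : E →L[ℝ] ℝ} {c δ : ℝ} (hδ : 0 < δ) {x₀ x₁ : E}
    (hmin : IsMinOn (fun y => u y - m y - c - δ * ‖T (y - x₀)‖ ^ 2) B x₁) :
    ∃ l : E →L[ℝ] ℝ, ∀ y ∈ B, y ≠ x₁ → u x₁ + l (y - x₁) < u y := by
  refine ⟨m + (2 * δ) • (innerSL ℝ (T (x₁ - x₀))).comp T, fun y hy hyx => ?_⟩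
  have hsq : ‖T (y - x₀)‖ ^ 2 =
      ‖T (x₁ - x₀)‖ ^ 2 + 2 * inner ℝ (T (x₁ - x₀)) (T (y - x₁)) + ‖T (y - x₁)‖ ^ 2 := by
    rw [← norm_add_sq_real, ← map_add, add_comm, sub_add_sub_cancel]
  have hnorm : 0 < ‖T (y - x₁)‖ :=
    norm_pos_iff.2 ((map_ne_zero_iff T hT).2 (sub_ne_zero.2 hyx))
  have hle := isMinOn_iff.1 hmin y hy
  simp only [add_apply, smul_apply, ContinuousLinearMap.comp_apply,
    innerSL_apply_apply, smul_eq_mul, map_sub m]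
  nlinarith [mul_pos hδ (pow_pos hnorm 2)]

variable [FiniteDimensional ℝ E]

lemma isCompact_convexHull_of_isCompact {s : Set E} (hs : IsCompact s) :
    IsCompact (convexHull ℝ s) := by
  let d := Module.finrank ℝ E
  have hhull : convexHull ℝ s = ⋃ n ∈ Finset.range (d + 2),
      (fun p : (Fin n → ℝ) × (Fin n → E) => ∑ i, p.1 i • p.2 i) ''
        (stdSimplex ℝ (Fin n) ×ˢ univ.pi fun _ => s) := by
    refine subset_antisymm (fun x hx => ?_) ?_
    · obtain ⟨ι, _, z, w, hz, hind, hw, hw1, hsum⟩ := eq_pos_convex_span_of_mem_convexHull hx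
      have hcard : Fintype.card ι < d + 2 := Nat.lt_succ_of_le (hind.card_le_finrank_succ.trans
        (Nat.succ_le_succ (Submodule.finrank_le _)))
      let e := (Fintype.equivFin ι).symm
      refine mem_biUnion (Finset.mem_coe.2 (Finset.mem_range.2 hcard))
        ⟨(w ∘ e, z ∘ e), ⟨⟨fun i => (hw _).le, (e.sum_comp w).trans hw1⟩,
          fun i _ => hz (mem_range_self _)⟩, (e.sum_comp fun i => w i • z i).trans hsum⟩
    · refine iUnion₂_subset fun n _ => image_subset_iff.2 fun p hp => ?_
      exact (convex_convexHull ℝ s).sum_mem (fun i _ => hp.1.1 i) hp.1.2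
        fun i _ => subset_convexHull ℝ s (hp.2 i trivial)
  rw [hhull]
  exact (Finset.range (d + 2)).isCompact_biUnion fun n _ =>
    ((isCompact_stdSimplex ℝ (Fin n)).prod (isCompact_univ_pi fun _ => hs)).image (by fun_prop)

lemma exists_clm_lt_on_sphere [Nontrivial E] {x₀ : E} {ρ : ℝ} (hu : ConvexOn ℝ Ω u) (hρ : 0 < ρ)
    (hball : closedBall x₀ ρ ⊆ interior Ω)
    (hext : (x₀, u x₀) ∈ extremePoints ℝ {p : E × ℝ | p.1 ∈ Ω ∧ u p.1 ≤ p.2}) :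
    ∃ (l : E →L[ℝ] ℝ) (c : ℝ), u x₀ < l x₀ + c ∧ ∀ y ∈ sphere x₀ ρ, l y + c < u y := by
  have : ProperSpace E := FiniteDimensional.proper_real E
  have hsphere : sphere x₀ ρ ⊆ interior Ω := sphere_subset_closedBall.trans hball
  have hsphereΩ : sphere x₀ ρ ⊆ Ω := hsphere.trans interior_subset
  have hcompact : IsCompact (convexHull ℝ ((sphere x₀ ρ).graphOn u)) :=
    isCompact_convexHull_of_isCompact ((isCompact_sphere x₀ ρ).image_of_continuousOn
      (continuousOn_id.prodMk (hu.continuousOn_interior.mono hsphere)))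
  have hx₀ : x₀ ∉ sphere x₀ ρ := by simpa using hρ.ne
  obtain ⟨F, s, hFx₀, hFhull⟩ := geometric_hahn_banach_point_closed (convex_convexHull ℝ _)
    hcompact.isClosed (notMem_convexHull_graphOn hu hsphereΩ hx₀ hext)
  have hFsplit : ∀ y z, F (y, z) = F (y, 0) + z * F (0, 1) := fun y z => by
    rw [← smul_eq_mul, ← map_smul, ← map_add]
    simp
  obtain ⟨z, hz⟩ : ∃ z, (x₀, z) ∈ convexHull ℝ ((sphere x₀ ρ).graphOn u) := by
    have hmem : x₀ ∈ LinearMap.fst ℝ E ℝ '' convexHull ℝ ((sphere x₀ ρ).graphOn u) := by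
      rw [LinearMap.image_convexHull, LinearMap.coe_fst, image_fst_graphOn,
        convexHull_sphere_eq_closedBall x₀ hρ.le]
      exact mem_closedBall_self hρ.le
    obtain ⟨⟨_, z⟩, hz, rfl⟩ := hmem
    exact ⟨z, hz⟩
  have hpos : 0 < F (0, 1) := by
    have huz : u x₀ ≤ z := (convexHull_graphOn_subset_epigraph hu hsphereΩ hz).2
    have hlt := hFx₀.trans (hFhull _ hz)
    rw [hFsplit x₀ (u x₀), hFsplit x₀ z] at hlt
    exact pos_of_mul_pos_right (by linarith : 0 < (z - u x₀) * F (0, 1)) (sub_nonneg.2 huz)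
  have happly : ∀ y, (-(F (0, 1))⁻¹ • F.comp (.inl ℝ E ℝ)) y + s / F (0, 1) =
      (s - F (y, 0)) / F (0, 1) := fun y => by
    simp only [smul_apply, ContinuousLinearMap.comp_apply, ContinuousLinearMap.inl_apply,
      smul_eq_mul]
    ring
  refine ⟨-(F (0, 1))⁻¹ • F.comp (.inl ℝ E ℝ), s / F (0, 1), ?_, fun y hy => ?_⟩
  · rw [happly, lt_div_iff₀ hpos]
    linarith [hFsplit x₀ (u x₀)]
  · rw [happly, div_lt_iff₀ hpos]
    linarith [hFsplit y (u y), hFhull _ (subset_convexHull ℝ _ (mem_image_of_mem _ hy))]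

lemma exists_isMinOn_sub_sq {x₀ : E} {ρ : ℝ} {F : Type*} [NormedAddCommGroup F]
    [NormedSpace ℝ F] (T : E →L[ℝ] F) {w : E → ℝ} (hρ : 0 ≤ ρ)
    (hw : ContinuousOn w (closedBall x₀ ρ)) (hneg : w x₀ < 0) (hpos : ∀ y ∈ sphere x₀ ρ, 0 ≤ w y) :
    ∃ δ > 0, ∃ x₁ ∈ ball x₀ ρ,
      IsMinOn (fun y => w y - δ * ‖T (y - x₀)‖ ^ 2) (closedBall x₀ ρ) x₁ := by
  have : ProperSpace E := FiniteDimensional.proper_real E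
  let δ := -w x₀ / ((‖T‖ * ρ) ^ 2 + 1)
  have hδ : 0 < δ := div_pos (neg_pos.2 hneg) (by positivity)
  have hδlt : δ * (‖T‖ * ρ) ^ 2 < -w x₀ := by
    rw [div_mul_eq_mul_div, div_lt_iff₀ (by positivity)]
    linarith
  obtain ⟨x₁, hx₁, hmin⟩ := (isCompact_closedBall x₀ ρ).exists_isMinOn
    ⟨x₀, mem_closedBall_self hρ⟩ (hw.sub (by fun_prop :
      ContinuousOn (fun y => δ * ‖T (y - x₀)‖ ^ 2) (closedBall x₀ ρ)))
  refine ⟨δ, hδ, x₁, ?_, hmin⟩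
  by_contra hx₁ball
  have hx₁sphere : x₁ ∈ sphere x₀ ρ := le_antisymm hx₁ (not_lt.1 hx₁ball)
  have hle : ‖T (x₁ - x₀)‖ ≤ ‖T‖ * ρ :=
    (mem_sphere_iff_norm.1 hx₁sphere) ▸ T.le_opNorm _
  have hle0 : w x₁ - δ * ‖T (x₁ - x₀)‖ ^ 2 ≤ w x₀ - δ * ‖T (x₀ - x₀)‖ ^ 2 :=
    hmin (mem_closedBall_self hρ)
  rw [sub_self x₀, map_zero, norm_zero, zero_pow two_ne_zero, mul_zero, sub_zero] at hle0
  linarith [hpos x₁ hx₁sphere,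
    mul_le_mul_of_nonneg_left (pow_le_pow_left₀ (norm_nonneg _) hle 2) hδ.le]

theorem exists_strict_support_of_mem_extremePoints [Nontrivial E] {x₀ : E} {ρ : ℝ}
    (hu : ConvexOn ℝ Ω u) (hρ : 0 < ρ) (hball : closedBall x₀ ρ ⊆ interior Ω)
    (hext : (x₀, u x₀) ∈ extremePoints ℝ {p : E × ℝ | p.1 ∈ Ω ∧ u p.1 ≤ p.2}) :
    ∃ x₁ ∈ ball x₀ ρ, ∃ l : E →L[ℝ] ℝ, ∀ y ∈ Ω, y ≠ x₁ → u x₁ + l (y - x₁) < u y := by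
  obtain ⟨m, c, hx₀, hsphere⟩ := exists_clm_lt_on_sphere hu hρ hball hext
  let T : E →L[ℝ] EuclideanSpace ℝ (Fin (Module.finrank ℝ E)) := (toEuclidean : E ≃L[ℝ] _)
  obtain ⟨δ, hδ, x₁, hx₁, hmin⟩ := exists_isMinOn_sub_sq T (w := fun y => u y - m y - c) hρ.le
    (((hu.continuousOn_interior.mono hball).sub m.continuous.continuousOn).sub continuousOn_const)
    (by linarith) fun y hy => by linarith [hsphere y hy]
  obtain ⟨l, hl⟩ := exists_add_clm_lt_of_isMinOn_sub_sq (toEuclidean : E ≃L[ℝ] _).injective hδ hmin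
  have hlocal : ∀ᶠ y in 𝓝[≠] x₁, u x₁ + l (y - x₁) < u y := by
    filter_upwards [mem_nhdsWithin_of_mem_nhds (isOpen_ball.mem_nhds hx₁), self_mem_nhdsWithin]
      with y hy hyx
    exact hl y (ball_subset_closedBall hy) hyx
  exact ⟨x₁, hx₁, l, fun y hy hyx => lt_of_eventually_lt_of_convexOn hu
    (interior_subset (hball (ball_subset_closedBall hx₁))) hlocal hy hyx⟩

end StrictSupport

section Nose

variable {E : Type*} [AddCommGroup E] [Module ℝ E] {Ω : Set E} {u : E → ℝ} {a k : ℝ} {x : E}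

/-- The points `x` of `Ω` such that, at `k • x`, the homothetic dilate `y ↦ k * u (k⁻¹ • y)` of `u`
lies strictly above `u`. -/
def dilationSet (Ω : Set E) (u : E → ℝ) (k : ℝ) : Set E :=
  {x | x ∈ Ω ∧ k • x ∈ Ω ∧ u (k • x) < k * u x}

/-- The set on which stretching the nose (see `noseHull`) strictly lowers `u`. -/
def noseSet (Ω : Set E) (u : E → ℝ) : Set E :=
  {x | ∃ k > 1, x ∈ dilationSet Ω u k}

/-- The function whose epigraph is the convex hull of the epigraph of `u` and the origin of
`E × ℝ`, obtained by joining the origin to the points `(s • x, u (s • x))` with `1 ≤ s`. It is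
meaningful on `Ω` when `0 ∈ Ω` and `u` is convex and bounded below. -/
noncomputable def noseHull (Ω : Set E) (u : E → ℝ) (x : E) : ℝ :=
  sInf ((fun s : ℝ => u (s • x) / s) '' {s | 1 ≤ s ∧ s • x ∈ Ω})

lemma smul_mem_of_smul_mem_of_zero_mem {s t : ℝ} (hΩ : Convex ℝ Ω) (h0 : (0 : E) ∈ Ω)
    (hs : 0 ≤ s) (hst : s ≤ t) (htx : t • x ∈ Ω) : s • x ∈ Ω := by
  rcases hs.eq_or_lt with rfl | hs
  · rwa [zero_smul]
  · have ht : 0 < t := hs.trans_le hst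
    have h := hΩ.smul_mem_of_zero_mem h0 htx (t := s / t) ⟨by positivity, (div_le_one ht).2 hst⟩
    rwa [smul_smul, div_mul_cancel₀ _ ht.ne'] at h

lemma sub_mul_le_of_convexOn_ray {r s t : ℝ} (hu : ConvexOn ℝ Ω u) (hrs : r < s) (hst : s < t)
    (hrx : r • x ∈ Ω) (htx : t • x ∈ Ω) :
    (t - r) * u (s • x) ≤ (t - s) * u (r • x) + (s - r) * u (t • x) :=
  (hu.comp_linearMap (LinearMap.toSpanSingleton ℝ E x)).secant_mono_aux1 hrx htx hrs hst

lemma mul_lt_mul_of_convexOn_ray {r s t : ℝ} (hu : ConvexOn ℝ Ω u) (hs : 0 < s) (hrs : r < s)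
    (hst : s < t) (hrx : r • x ∈ Ω) (htx : t • x ∈ Ω) (hlt : s * u (t • x) < t * u (s • x)) :
    r * u (s • x) < s * u (r • x) := by
  have hconv := mul_le_mul_of_nonneg_left (sub_mul_le_of_convexOn_ray hu hrs hst hrx htx) hs.le
  have hgain := mul_lt_mul_of_pos_left hlt (sub_pos.2 hrs)
  have : (t - s) * (r * u (s • x)) < (t - s) * (s * u (r • x)) := by linarith
  exact lt_of_mul_lt_mul_left this (sub_pos.2 hst).le

lemma mem_dilationSet_of_le {s : ℝ} (hu : ConvexOn ℝ Ω u) (hk : 1 < k) (hks : k ≤ s)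
    (hx : x ∈ dilationSet Ω u s) : x ∈ dilationSet Ω u k := by
  rcases hks.eq_or_lt with rfl | hks
  · exact hx
  obtain ⟨hxΩ, hsx, hlt⟩ := hx
  have h1x : (1 : ℝ) • x ∈ Ω := by rwa [one_smul]
  have hconv := sub_mul_le_of_convexOn_ray hu hk hks h1x hsx
  have hkx : k • x ∈ Ω :=
    (hu.1.linear_preimage (LinearMap.toSpanSingleton ℝ E x)).ordConnected.out h1x hsx
      ⟨hk.le, hks.le⟩
  refine ⟨hxΩ, hkx, ?_⟩
  rw [one_smul] at hconv
  have hgain := mul_lt_mul_of_pos_left hlt (sub_pos.2 hk)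
  have : (s - 1) * u (k • x) < (s - 1) * (k * u x) := by linarith
  exact lt_of_mul_lt_mul_left this (by linarith)

lemma mem_dilationSet_of_smul_mem_noseSet (hu : ConvexOn ℝ Ω u) (h0 : (0 : E) ∈ Ω) (hk : 1 < k)
    (hx : k • x ∈ noseSet Ω u) : x ∈ dilationSet Ω u k := by
  obtain ⟨s, hs, hkx, hskx, hlt⟩ := hx
  rw [smul_smul] at hskx hlt
  have h1x : (1 : ℝ) • x ∈ Ω :=
    smul_mem_of_smul_mem_of_zero_mem hu.1 h0 zero_le_one hk.le hkx
  have hray := mul_lt_mul_of_convexOn_ray hu (zero_lt_one.trans hk) hk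
    (lt_mul_of_one_lt_left (zero_lt_one.trans hk) hs) h1x hskx
    (by linarith [mul_lt_mul_of_pos_left hlt (zero_lt_one.trans hk)])
  rw [one_smul] at h1x hray
  exact ⟨h1x, hkx, by linarith⟩

lemma le_div_of_le_of_nonpos {s : ℝ} (ha : a ≤ 0) (hau : ∀ y ∈ Ω, a ≤ u y) (hs : 1 ≤ s)
    (hsx : s • x ∈ Ω) : a ≤ u (s • x) / s := by
  rw [le_div_iff₀ (zero_lt_one.trans_le hs)]
  exact (mul_le_of_one_le_right ha hs).trans (hau _ hsx)

lemma noseHull_le_div {s : ℝ} (ha : a ≤ 0) (hau : ∀ y ∈ Ω, a ≤ u y) (hs : 1 ≤ s)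
    (hsx : s • x ∈ Ω) : noseHull Ω u x ≤ u (s • x) / s :=
  csInf_le ⟨a, forall_mem_image.2 fun _ ht => le_div_of_le_of_nonpos ha hau ht.1 ht.2⟩
    (mem_image_of_mem _ ⟨hs, hsx⟩)

lemma noseHull_le (ha : a ≤ 0) (hau : ∀ y ∈ Ω, a ≤ u y) (hx : x ∈ Ω) :
    noseHull Ω u x ≤ u x := by
  simpa using noseHull_le_div ha hau le_rfl (by rwa [one_smul])

lemma nonempty_smul_mem (hx : x ∈ Ω) : {s : ℝ | 1 ≤ s ∧ s • x ∈ Ω}.Nonempty :=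
  ⟨1, le_rfl, by rwa [one_smul]⟩

lemma le_noseHull {c : ℝ} (hx : x ∈ Ω) (h : ∀ s : ℝ, 1 ≤ s → s • x ∈ Ω → c ≤ u (s • x) / s) :
    c ≤ noseHull Ω u x :=
  le_csInf ((nonempty_smul_mem hx).image _) (forall_mem_image.2 fun s hs => h s hs.1 hs.2)

lemma exists_div_lt_of_noseHull_lt {c : ℝ} (hx : x ∈ Ω) (h : noseHull Ω u x < c) :
    ∃ s : ℝ, 1 ≤ s ∧ s • x ∈ Ω ∧ u (s • x) / s < c := by
  obtain ⟨_, ⟨s, ⟨hs, hsx⟩, rfl⟩, hlt⟩ :=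
    exists_lt_of_csInf_lt ((nonempty_smul_mem hx).image _) h
  exact ⟨s, hs, hsx, hlt⟩

lemma noseHull_lt (ha : a ≤ 0) (hau : ∀ y ∈ Ω, a ≤ u y) (hx : x ∈ noseSet Ω u) :
    noseHull Ω u x < u x := by
  obtain ⟨s, hs, -, hsx, hlt⟩ := hx
  exact (noseHull_le_div ha hau hs.le hsx).trans_lt
    ((div_lt_iff₀' (zero_lt_one.trans hs)).2 hlt)

lemma mul_le_of_notMem_noseSet {s : ℝ} (hx : x ∈ Ω) (hxn : x ∉ noseSet Ω u) (hs : 1 ≤ s)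
    (hsx : s • x ∈ Ω) : s * u x ≤ u (s • x) := by
  rcases hs.eq_or_lt with rfl | hs
  · simp
  · exact not_lt.1 fun hlt => hxn ⟨s, hs, hx, hsx, hlt⟩

lemma noseHull_eq_of_notMem (ha : a ≤ 0) (hau : ∀ y ∈ Ω, a ≤ u y) (hx : x ∈ Ω)
    (hxn : x ∉ noseSet Ω u) : noseHull Ω u x = u x := by
  refine le_antisymm (noseHull_le ha hau hx) (le_noseHull hx fun s hs hsx => ?_)
  rw [le_div_iff₀' (zero_lt_one.trans_le hs)]
  exact mul_le_of_notMem_noseSet hx hxn hs hsx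

lemma exists_combo_div_le_of_convexOn {x y : E} {s t α β : ℝ} (hu : ConvexOn ℝ Ω u)
    (hs : 1 ≤ s) (ht : 1 ≤ t) (hsx : s • x ∈ Ω) (hty : t • y ∈ Ω)
    (hα : 0 ≤ α) (hβ : 0 ≤ β) (hαβ : α + β = 1) :
    ∃ r : ℝ, 1 ≤ r ∧ r • (α • x + β • y) ∈ Ω ∧
      u (r • (α • x + β • y)) / r ≤ α * (u (s • x) / s) + β * (u (t • y) / t) := by
  obtain ⟨τ, hτ⟩ : ∃ τ, τ = α / s + β / t := ⟨_, rfl⟩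
  have hτ0 : 0 < τ := by
    rw [hτ]
    rcases hα.eq_or_lt with rfl | hα
    · obtain rfl : β = 1 := by linarith
      positivity
    · positivity
  have hτ1 : τ ≤ 1 := by linarith [div_le_self hα hs, div_le_self hβ ht]
  have hsum : α / s / τ + β / t / τ = 1 := by rw [← add_div, ← hτ, div_self hτ0.ne']
  have hcombo : τ⁻¹ • (α • x + β • y) = (α / s / τ) • s • x + (β / t / τ) • t • y := by
    rw [smul_smul, smul_smul, smul_add, smul_smul, smul_smul]
    congr 2 <;> field_simp
  refine ⟨τ⁻¹, (one_le_inv₀ hτ0).2 hτ1, ?_, ?_⟩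
  · rw [hcombo]
    exact hu.1 hsx hty (by positivity) (by positivity) hsum
  · calc u (τ⁻¹ • (α • x + β • y)) / τ⁻¹
        = τ * u ((α / s / τ) • s • x + (β / t / τ) • t • y) := by
          rw [hcombo, div_inv_eq_mul, mul_comm]
      _ ≤ τ * (α / s / τ * u (s • x) + β / t / τ * u (t • y)) := by
          gcongr
          exact hu.2 hsx hty (by positivity) (by positivity) hsum
      _ = α * (u (s • x) / s) + β * (u (t • y) / t) := by field_simp

lemma convexOn_noseHull (hu : ConvexOn ℝ Ω u) (ha : a ≤ 0) (hau : ∀ y ∈ Ω, a ≤ u y) :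
    ConvexOn ℝ Ω (noseHull Ω u) := by
  refine ⟨hu.1, fun x hx y hy α β hα hβ hαβ => le_of_forall_pos_le_add fun ε hε => ?_⟩
  obtain ⟨s, hs, hsx, hsε⟩ := exists_div_lt_of_noseHull_lt hx
    (lt_add_of_pos_right (noseHull Ω u x) hε)
  obtain ⟨t, ht, hty, htε⟩ := exists_div_lt_of_noseHull_lt hy
    (lt_add_of_pos_right (noseHull Ω u y) hε)
  obtain ⟨r, hr, hmem, hle⟩ := exists_combo_div_le_of_convexOn hu hs ht hsx hty hα hβ hαβ
  calc noseHull Ω u (α • x + β • y)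
      ≤ α * (u (s • x) / s) + β * (u (t • y) / t) := (noseHull_le_div ha hau hr hmem).trans hle
    _ ≤ α * (noseHull Ω u x + ε) + β * (noseHull Ω u y + ε) := by gcongr
    _ = α * noseHull Ω u x + β * noseHull Ω u y + (α + β) * ε := by ring
    _ = α • noseHull Ω u x + β • noseHull Ω u y + ε := by
        rw [hαβ, one_mul, smul_eq_mul, smul_eq_mul]

lemma noseHull_smul (hu : ConvexOn ℝ Ω u) (h0 : (0 : E) ∈ Ω) (ha : a ≤ 0)
    (hau : ∀ y ∈ Ω, a ≤ u y) (hk : 1 < k) (hx : k • x ∈ noseSet Ω u) :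
    noseHull Ω u (k • x) = k * noseHull Ω u x := by
  have hk0 : 0 < k := zero_lt_one.trans hk
  obtain ⟨t, ht, hkx, htx, hlt⟩ := id hx
  rw [smul_smul] at htx hlt
  apply le_antisymm
  · rw [← div_le_iff₀' hk0]
    refine le_noseHull (mem_dilationSet_of_smul_mem_noseSet hu h0 hk hx).1 fun s hs hsx => ?_
    have hs0 : 0 < s := zero_lt_one.trans_le hs
    rw [div_le_iff₀ hk0]
    rcases lt_or_ge s k with hsk | hks
    · have hray := mul_lt_mul_of_convexOn_ray hu hk0 hsk (lt_mul_of_one_lt_left hk0 ht) hsx htx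
        (by linarith [mul_lt_mul_of_pos_left hlt hk0])
      refine (noseHull_le ha hau hkx).trans ?_
      rw [div_mul_eq_mul_div, le_div_iff₀ hs0]
      linarith
    · have hsk : (s / k) • k • x = s • x := by rw [smul_smul, div_mul_cancel₀ _ hk0.ne']
      have hle := noseHull_le_div ha hau ((one_le_div hk0).2 hks) (hsk ▸ hsx)
      rw [hsk] at hle
      exact hle.trans_eq (by field_simp)
  · refine le_noseHull hkx fun s hs hsx => ?_
    rw [smul_smul] at hsx ⊢
    have hle := noseHull_le_div ha hau (one_le_mul_of_one_le_of_one_le hs hk.le) hsx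
    rw [le_div_iff₀ (by positivity)] at hle ⊢
    linarith

lemma noseHull_eq_div_of_isMinOn {r : ℝ} (ha : a ≤ 0) (hau : ∀ y ∈ Ω, a ≤ u y) (hk : 1 ≤ k)
    (hxΩ : ∀ s ∈ Icc 1 k, s • x ∈ Ω) (hkx : k • x ∉ noseSet Ω u) (hr : r ∈ Icc 1 k)
    (hmin : IsMinOn (fun s : ℝ => u (s • x) / s) (Icc 1 k) r) :
    noseHull Ω u x = u (r • x) / r := by
  have hk0 : 0 < k := zero_lt_one.trans_le hk
  have hx : x ∈ Ω := by simpa using hxΩ 1 ⟨le_rfl, hk⟩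
  refine le_antisymm (noseHull_le_div ha hau hr.1 (hxΩ r hr)) (le_noseHull hx fun s hs hsx => ?_)
  rcases le_or_gt s k with hsk | hks
  · exact hmin ⟨hs, hsk⟩
  · have hsk : (s / k) • k • x = s • x := by rw [smul_smul, div_mul_cancel₀ _ hk0.ne']
    have hle := mul_le_of_notMem_noseSet (hxΩ k ⟨hk, le_rfl⟩) hkx ((one_le_div hk0).2 hks.le)
      (hsk ▸ hsx)
    refine (hmin (⟨hk, le_rfl⟩ : k ∈ Icc 1 k)).trans ?_
    rw [hsk, div_mul_eq_mul_div, div_le_iff₀ hk0] at hle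
    change u (k • x) / k ≤ u (s • x) / s
    rw [div_le_div_iff₀ hk0 (zero_lt_one.trans_le hs)]
    linarith

end Nose

section NoseLocalization

lemma noseSet_add_linearMap {E : Type*} [AddCommGroup E] [Module ℝ E] (Ω : Set E) (u : E → ℝ)
    (l : E →ₗ[ℝ] ℝ) : noseSet Ω (fun y => u y + l y) = noseSet Ω u := by
  simp only [noseSet, dilationSet, map_smul, smul_eq_mul, mul_add, add_lt_add_iff_right]

variable {E : Type*} [NormedAddCommGroup E] [NormedSpace ℝ E] {Ω : Set E} {q u : E → ℝ} {ρ : ℝ}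

lemma exists_mul_norm_le_of_convexOn [FiniteDimensional ℝ E] (hq : ConvexOn ℝ Ω q) (hq0 : q 0 = 0)
    (hρ : 0 < ρ) (hball : closedBall 0 ρ ⊆ interior Ω) (hpos : ∀ y ∈ sphere 0 ρ, 0 < q y) :
    ∃ c > 0, ∀ y ∈ Ω, ρ ≤ ‖y‖ → c * ‖y‖ ≤ q y := by
  have h0 : (0 : E) ∈ Ω := interior_subset (hball (mem_closedBall_self hρ.le))
  obtain ⟨m, hm, hmq⟩ := (isCompact_sphere (0 : E) ρ).exists_forall_le'
    (hq.continuousOn_interior.mono (sphere_subset_closedBall.trans hball)) hpos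
  refine ⟨m / ρ, by positivity, fun y hy hyρ => ?_⟩
  have hy0 : 0 < ‖y‖ := hρ.trans_le hyρ
  have hsphere : (ρ / ‖y‖) • y ∈ sphere (0 : E) ρ := by
    rw [mem_sphere_zero_iff_norm, norm_smul, Real.norm_of_nonneg (by positivity),
      div_mul_cancel₀ _ hy0.ne']
  have hconv := hq.2 hy h0 (div_nonneg hρ.le hy0.le)
    (sub_nonneg.2 ((div_le_one hy0).2 hyρ)) (by ring)
  simp only [smul_zero, add_zero, hq0, smul_eq_mul, mul_zero] at hconv
  have hle := (hmq _ hsphere).trans hconv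
  rw [div_mul_eq_mul_div, le_div_iff₀ hy0] at hle
  rwa [div_mul_eq_mul_div, div_le_iff₀ hρ, mul_comm (q y)]

lemma exists_forall_mem_sphere_le_of_hasFDerivAt_zero {c : ℝ} (hq0 : q 0 = 0)
    (hd : HasFDerivAt q (0 : E →L[ℝ] ℝ) 0) (hc : 0 < c) (hρ : 0 < ρ) :
    ∃ t ∈ Ioo 0 ρ, ∀ y, ‖y‖ = t → q y ≤ c * t := by
  have hsmall := hd.isLittleO.def hc
  obtain ⟨t, ht, htq⟩ := Metric.eventually_nhds_iff.1 hsmall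
  refine ⟨min t ρ / 2, ⟨by positivity, by linarith [min_le_right t ρ]⟩, fun y hy => ?_⟩
  have hy' := htq (y := y) (by rw [dist_zero_right, hy]; linarith [min_le_left t ρ, lt_min ht hρ])
  simp only [hq0, sub_zero, zero_apply, hy] at hy'
  exact (le_abs_self _).trans hy'

/-- A point beyond radius `ρ` in the nose set would force `q + ε` to be large at the point of norm
`t` on the same ray, where `q` is small because its derivative vanishes. -/
lemma exists_noseSet_add_const_subset_ball {c : ℝ} (hq : ConvexOn ℝ Ω q) (h0 : (0 : E) ∈ Ω)
    (hq0 : q 0 = 0) (hd : HasFDerivAt q (0 : E →L[ℝ] ℝ) 0) (hc : 0 < c) (hρ : 0 < ρ)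
    (hgrowth : ∀ y ∈ Ω, ρ ≤ ‖y‖ → c * ‖y‖ ≤ q y) :
    ∃ ε₀ > 0, ∀ ε ∈ Ioo 0 ε₀, noseSet Ω (fun y => q y + ε) ⊆ ball 0 ρ := by
  obtain ⟨t, ⟨ht, htρ⟩, htq⟩ :=
    exists_forall_mem_sphere_le_of_hasFDerivAt_zero hq0 hd (half_pos hc) hρ
  refine ⟨c * t / 2, by positivity, fun ε ⟨hε, hεt⟩ y ⟨s, hs, hy, hsy, hlt⟩ => ?_⟩
  rw [mem_ball_zero_iff]
  by_contra! hyρ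
  have hy0 : 0 < ‖y‖ := hρ.trans_le hyρ
  have ht1 : t / ‖y‖ < 1 := (div_lt_one hy0).2 (htρ.trans_le hyρ)
  have h1y : (1 : ℝ) • y ∈ Ω := by rwa [one_smul]
  have hty : (t / ‖y‖) • y ∈ Ω :=
    smul_mem_of_smul_mem_of_zero_mem hq.1 h0 (by positivity) ht1.le h1y
  have hray := mul_lt_mul_of_convexOn_ray (hq.add_const ε) one_pos ht1 hs hty hsy
    (by simpa using hlt)
  simp only [one_smul, one_mul, Pi.add_apply] at hray
  have hnear : q ((t / ‖y‖) • y) ≤ c / 2 * t := htq _ (by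
    rw [norm_smul, Real.norm_of_nonneg (by positivity), div_mul_cancel₀ _ hy0.ne'])
  have hfar : c * t ≤ t / ‖y‖ * q y := by
    rw [div_mul_eq_mul_div, le_div_iff₀ hy0]
    linarith [mul_le_mul_of_nonneg_left (hgrowth y hy hyρ) ht.le]
  have hε' : 0 < t / ‖y‖ * ε := by positivity
  linarith

lemma exists_noseSet_subset_ball_of_strict_support [FiniteDimensional ℝ E] {l : E →L[ℝ] ℝ}
    (hu : ConvexOn ℝ Ω u) (hd : DifferentiableAt ℝ u 0) (hρ : 0 < ρ)
    (hball : closedBall 0 ρ ⊆ interior Ω) (hl : ∀ y ∈ Ω, y ≠ 0 → u 0 + l y < u y) :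
    ∃ ε₀ > 0, ∀ ε ∈ Ioo 0 ε₀, noseSet Ω (fun y => u y - u 0 + ε) ⊆ ball 0 ρ := by
  have h0 : (0 : E) ∈ interior Ω := hball (mem_closedBall_self hρ.le)
  have hderiv : fderiv ℝ u 0 = l := by
    have hsupp : ∀ᶠ y in 𝓝 (0 : E), u 0 + l y ≤ u y := by
      filter_upwards [isOpen_interior.mem_nhds h0] with y hy
      rcases eq_or_ne y 0 with rfl | hy0
      · simp
      · exact (hl y (interior_subset hy) hy0).le
    have haff : HasFDerivAt (fun y => u 0 + l y) l 0 := l.hasFDerivAt.const_add (u 0)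
    rw [← fderiv_eq_of_eventually_le haff.differentiableAt hd hsupp (by simp), haff.fderiv]
  have hq : ConvexOn ℝ Ω (fun y => (u y - u 0) + (-l) y) :=
    (hu.add_const (-u 0)).add ((-l : E →ₗ[ℝ] ℝ).convexOn hu.1)
  have hdq : HasFDerivAt (fun y => (u y - u 0) + (-l) y) (0 : E →L[ℝ] ℝ) 0 := by
    rw [← add_neg_cancel l]
    exact ((hderiv ▸ hd.hasFDerivAt).sub_const (u 0)).add (-l).hasFDerivAt
  obtain ⟨c, hc, hgrowth⟩ := exists_mul_norm_le_of_convexOn hq (by simp) hρ hball fun y hy => by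
    have := hl y (interior_subset (hball (sphere_subset_closedBall hy)))
      (ne_zero_of_mem_sphere hρ.ne' ⟨y, hy⟩)
    simp only [neg_apply]
    linarith
  obtain ⟨ε₀, hε₀, hsub⟩ := exists_noseSet_add_const_subset_ball hq (interior_subset h0) (by simp)
    hdq hc hρ hgrowth
  refine ⟨ε₀, hε₀, fun ε hε => ?_⟩
  rw [← noseSet_add_linearMap Ω _ (-l : E →L[ℝ] ℝ).toLinearMap]
  convert hsub ε hε using 3
  simp only [ContinuousLinearMap.coe_coe]
  ring

end NoseLocalization

section Dilate

variable {E : Type*} [AddCommGroup E] [Module ℝ E] {Ω : Set E} {u : E → ℝ} {k : ℝ} {x : E}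

/-- The supremum of `u` and its homothetic dilate `y ↦ k * u (k⁻¹ • y)`: the competitor against
which a minimizer `u` is tested. -/
noncomputable def dilateSup (u : E → ℝ) (k : ℝ) (x : E) : ℝ :=
  max (u x) (k * u (k⁻¹ • x))

lemma convexOn_dilateSup (hu : ConvexOn ℝ Ω u) (h0 : (0 : E) ∈ Ω) (hk : 1 ≤ k) :
    ConvexOn ℝ Ω (dilateSup u k) := by
  have hk0 : 0 ≤ k := zero_le_one.trans hk
  have hsub : Ω ⊆ LinearMap.lsmul ℝ E k⁻¹ ⁻¹' Ω := fun x hx =>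
    hu.1.smul_mem_of_zero_mem h0 hx ⟨inv_nonneg.2 hk0, inv_le_one_of_one_le₀ hk⟩
  exact hu.sup (((hu.comp_linearMap (LinearMap.lsmul ℝ E k⁻¹)).subset hsub hu.1).smul hk0)

lemma dilateSup_eq_of_notMem (hΩ : Convex ℝ Ω) (h0 : (0 : E) ∈ Ω) (hk : 1 ≤ k) (hx : x ∈ Ω)
    (hxk : x ∉ k • dilationSet Ω u k) : dilateSup u k x = u x := by
  have hk0 : 0 < k := zero_lt_one.trans_le hk
  have hx' : k⁻¹ • x ∈ Ω :=
    hΩ.smul_mem_of_zero_mem h0 hx ⟨inv_nonneg.2 hk0.le, inv_le_one_of_one_le₀ hk⟩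
  rw [mem_smul_set_iff_inv_smul_mem₀ hk0.ne'] at hxk
  refine max_eq_left (not_lt.1 fun hlt => hxk ⟨hx', ?_⟩)
  rw [smul_inv_smul₀ hk0.ne']
  exact ⟨hx, hlt⟩

lemma dilateSup_eq_of_mem (hk : k ≠ 0) (hx : x ∈ k • dilationSet Ω u k) :
    dilateSup u k x = k * u (k⁻¹ • x) := by
  obtain ⟨y, ⟨-, -, hlt⟩, rfl⟩ := hx
  change max (u (k • y)) (k * u (k⁻¹ • k • y)) = k * u (k⁻¹ • k • y)
  rw [inv_smul_smul₀ hk]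
  exact max_eq_right hlt.le

end Dilate

section SmoothNose

variable {E : Type*} [NormedAddCommGroup E] [NormedSpace ℝ E]
  {Ω : Set E} {u : E → ℝ} {a b k ρ : ℝ} {x : E}

lemma smul_mem_ball_two_mul (hx : x ∈ ball (0 : E) ρ) (hk0 : 0 ≤ k) (hk2 : k ≤ 2) :
    k • x ∈ ball (0 : E) (2 * ρ) := by
  rw [mem_ball_zero_iff] at hx ⊢
  rw [norm_smul, Real.norm_of_nonneg hk0]
  nlinarith [norm_nonneg x]

lemma dilateSup_mem_convexBetween [Nontrivial E] (hu : u ∈ convexBetween Ω a b) (hρ : 0 < ρ)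
    (hball : ball 0 (2 * ρ) ⊆ Ω) (hnose : noseSet Ω u ⊆ ball 0 ρ) (hk : 1 < k) (hk2 : k < 2) :
    dilateSup u k ∈ convexBetween Ω a b := by
  have hk0 : 0 < k := zero_lt_one.trans hk
  have h0 : (0 : E) ∈ Ω := hball (mem_ball_self (by positivity))
  have hconv : ConvexOn ℝ Ω (dilateSup u k) := convexOn_dilateSup hu.1 h0 hk.le
  have hfar : ∀ y ∈ Ω, k * ρ ≤ ‖y‖ → dilateSup u k y = u y := by
    refine fun y hy hyρ => dilateSup_eq_of_notMem hu.1.1 h0 hk.le hy ?_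
    rintro ⟨z, hz, rfl⟩
    have hzρ := mem_ball_zero_iff.1 (hnose ⟨k, hk, hz⟩)
    change k * ρ ≤ ‖k • z‖ at hyρ
    rw [norm_smul, Real.norm_of_nonneg hk0.le] at hyρ
    exact absurd (le_of_mul_le_mul_left hyρ hk0) hzρ.not_ge
  refine ⟨hconv, fun y hy => ⟨(hu.2 y hy).1.trans (le_max_left _ _), ?_⟩⟩
  rcases le_total (k * ρ) ‖y‖ with hyρ | hyρ
  · exact (hfar y hy hyρ).trans_le (hu.2 y hy).2
  have hsphere : sphere (0 : E) (k * ρ) ⊆ Ω := fun z hz => hball <| by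
    rw [mem_ball_zero_iff, mem_sphere_zero_iff_norm.1 hz]
    gcongr
  have hy' : y ∈ convexHull ℝ (sphere (0 : E) (k * ρ)) := by
    rw [convexHull_sphere_eq_closedBall (0 : E) (by positivity)]
    exact mem_closedBall_zero_iff.2 hyρ
  obtain ⟨z, hz, hyz⟩ := hconv.exists_ge_of_mem_convexHull hsphere hy'
  rw [hfar z (hsphere hz) (mem_sphere_zero_iff_norm.1 hz).ge] at hyz
  exact hyz.trans (hu.2 z (hsphere hz)).2

lemma isOpen_dilationSet [FiniteDimensional ℝ E] (hu : ConvexOn ℝ Ω u) (hρ : 0 < ρ)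
    (hball : ball 0 (2 * ρ) ⊆ Ω) (hnose : noseSet Ω u ⊆ ball 0 ρ) (hk : 1 < k) (hk2 : k ≤ 2) :
    IsOpen (dilationSet Ω u k) := by
  have hcont : ContinuousOn u (ball 0 (2 * ρ)) := (hu.subset hball (convex_ball 0 _)).continuousOn
    isOpen_ball
  have hsub : ball (0 : E) ρ ⊆ ball 0 (2 * ρ) := ball_subset_ball (by linarith)
  have hsmul : MapsTo (fun x : E => k • x) (ball 0 ρ) (ball 0 (2 * ρ)) := fun x hx =>
    smul_mem_ball_two_mul hx (zero_le_one.trans hk.le) hk2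
  have heq : dilationSet Ω u k = ball 0 ρ ∩ (fun x => k * u x - u (k • x)) ⁻¹' Ioi 0 := by
    ext x
    refine ⟨fun hx => ⟨hnose ⟨k, hk, hx⟩, sub_pos.2 hx.2.2⟩, fun ⟨hx, hlt⟩ => ?_⟩
    exact ⟨hball (hsub hx), hball (hsmul hx), sub_pos.1 hlt⟩
  rw [heq]
  exact ((continuousOn_const.mul (hcont.mono hsub)).sub
    (hcont.comp (continuous_const_smul k).continuousOn hsmul)).isOpen_inter_preimage
    isOpen_ball isOpen_Ioi

lemma isOpen_noseSet [FiniteDimensional ℝ E] (hu : ConvexOn ℝ Ω u) (hρ : 0 < ρ)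
    (hball : ball 0 (2 * ρ) ⊆ Ω) (hnose : noseSet Ω u ⊆ ball 0 ρ) : IsOpen (noseSet Ω u) := by
  refine isOpen_iff_mem_nhds.2 fun x ⟨k, hk, hx⟩ => ?_
  have hk' : 1 < min k 2 := lt_min hk one_lt_two
  refine mem_of_superset ((isOpen_dilationSet hu hρ hball hnose hk' (min_le_right _ _)).mem_nhds
    (mem_dilationSet_of_le hu hk' (min_le_left _ _) hx)) fun y hy => ⟨_, hk', hy⟩

lemma fderiv_noseHull_smul (hu : ConvexOn ℝ Ω u) (h0 : (0 : E) ∈ Ω) (ha : a ≤ 0)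
    (hau : ∀ y ∈ Ω, a ≤ u y) (hopen : IsOpen (noseSet Ω u)) (hk : 1 < k)
    (hx : k • x ∈ noseSet Ω u) :
    fderiv ℝ (noseHull Ω u) (k • x) = fderiv ℝ (noseHull Ω u) x := by
  have hhom : (fun z => noseHull Ω u (k • z)) =ᶠ[𝓝 x] k • noseHull Ω u := by
    filter_upwards [(hopen.preimage (continuous_const_smul k)).mem_nhds hx] with z hz
    exact noseHull_smul hu h0 ha hau hk hz
  have hderiv := hhom.fderiv_eq (𝕜 := ℝ)
  rw [fderiv_comp_smul, fderiv_const_smul_field, Pi.smul_apply] at hderiv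
  exact smul_right_injective _ (zero_lt_one.trans hk).ne' hderiv

lemma exists_fderiv_noseHull_eq (ha : a ≤ 0) (hau : ∀ y ∈ Ω, a ≤ u y) (hk : 1 ≤ k)
    (hxΩ : ∀ s ∈ Icc 1 k, s • x ∈ interior Ω)
    (hdu : ∀ s ∈ Icc 1 k, DifferentiableAt ℝ u (s • x)) (hkx : k • x ∉ noseSet Ω u)
    (hd : DifferentiableAt ℝ (noseHull Ω u) x) :
    ∃ r ∈ Icc 1 k, fderiv ℝ (noseHull Ω u) x = fderiv ℝ u (r • x) := by
  have hcont : ContinuousOn (fun s : ℝ => u (s • x) / s) (Icc 1 k) := fun s hs =>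
    (((hdu s hs).continuousAt.comp (f := fun s : ℝ => s • x) (by fun_prop)).div continuousAt_id
      (zero_lt_one.trans_le hs.1).ne').continuousWithinAt
  obtain ⟨r, hr, hmin⟩ := isCompact_Icc.exists_isMinOn (nonempty_Icc.2 hk) hcont
  have hr0 : r ≠ 0 := (zero_lt_one.trans_le hr.1).ne'
  have htouch : noseHull Ω u x = (r⁻¹ • fun z => u (r • z)) x := by
    rw [noseHull_eq_div_of_isMinOn ha hau hk (fun s hs => interior_subset (hxΩ s hs)) hkx hr hmin,
      div_eq_inv_mul]
    rfl
  have habove : ∀ᶠ z in 𝓝 x, noseHull Ω u z ≤ (r⁻¹ • fun z => u (r • z)) z := by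
    filter_upwards [(continuous_const_smul r).continuousAt.eventually_mem
      (isOpen_interior.mem_nhds (hxΩ r hr))] with z hz
    exact (noseHull_le_div ha hau hr.1 (interior_subset hz)).trans_eq (div_eq_inv_mul _ _)
  have hdr : DifferentiableAt ℝ (fun z => u (r • z)) x :=
    DifferentiableAt.comp x (hdu r hr) (by fun_prop)
  refine ⟨r, hr, ?_⟩
  rw [fderiv_eq_of_eventually_le hd (hdr.const_smul r⁻¹) habove htouch, fderiv_const_smul_field,
    Pi.smul_apply, fderiv_comp_smul, smul_smul, inv_mul_cancel₀ hr0, one_smul]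

lemma fderiv_dilateSup_smul (hopen : IsOpen (dilationSet Ω u k)) (hk : k ≠ 0)
    (hx : x ∈ dilationSet Ω u k) : fderiv ℝ (dilateSup u k) (k • x) = fderiv ℝ u x := by
  have heq : dilateSup u k =ᶠ[𝓝 (k • x)] k • fun y => u (k⁻¹ • y) := by
    filter_upwards [(hopen.smul₀ hk).mem_nhds (smul_mem_smul_set hx)] with y hy
    exact dilateSup_eq_of_mem hk hy
  rw [heq.fderiv_eq, fderiv_const_smul_field, Pi.smul_apply, fderiv_comp_smul, smul_smul,
    mul_inv_cancel₀ hk, one_smul, inv_smul_smul₀ hk]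

end SmoothNose

section EnergyComparison

variable {E : Type*} [NormedAddCommGroup E] [NormedSpace ℝ E] [FiniteDimensional ℝ E]
  [MeasurableSpace E] [BorelSpace E] {μ : Measure E} [μ.IsAddHaarMeasure] {Ω D : Set E}
  {u v : E → ℝ} {g : (E →L[ℝ] ℝ) → ℝ} {k K : ℝ}

lemma gradIntegral_sub_eq_setIntegral (hΩ : IsCompact Ω) (hg : Continuous g)
    (hK : ∀ ξ, |g ξ| ≤ K) (hu : ConvexOn ℝ Ω u) (hv : ConvexOn ℝ Ω v) (hvu : ∀ x ∈ Ω, v x ≤ u x)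
    (hD : D ⊆ Ω) (heq : ∀ x ∈ Ω, x ∉ D → v x = u x) :
    gradIntegral μ g Ω v - gradIntegral μ g Ω u =
      ∫ x in D, (g (fderiv ℝ v x) - g (fderiv ℝ u x)) ∂μ := by
  have hfin : μ Ω < ⊤ := hΩ.measure_lt_top
  rw [gradIntegral, gradIntegral, ← integral_sub (integrableOn_comp_fderiv hg hK v hfin)
    (integrableOn_comp_fderiv hg hK u hfin)]
  refine setIntegral_eq_of_subset_of_ae_sdiff_eq_zero hΩ.measurableSet.nullMeasurableSet hD ?_
  filter_upwards [ae_mem_interior_of_convex μ hu.1, ae_differentiableAt_of_convexOn μ hu,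
    ae_differentiableAt_of_convexOn μ hv] with x hint hdu hdv ⟨hx, hxD⟩
  have hle : ∀ᶠ y in 𝓝 x, v y ≤ u y := by
    filter_upwards [isOpen_interior.mem_nhds (hint hx)] with y hy
    exact hvu y (interior_subset hy)
  rw [fderiv_eq_of_eventually_le (hdv hx) (hdu hx) hle (heq x hx hxD), sub_self]

lemma gradIntegral_dilateSup_sub (hΩ : IsCompact Ω) (hg : Continuous g) (hK : ∀ ξ, |g ξ| ≤ K)
    (hu : ConvexOn ℝ Ω u) (h0 : (0 : E) ∈ Ω) (hk : 1 ≤ k) (hopen : IsOpen (dilationSet Ω u k)) :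
    gradIntegral μ g Ω (dilateSup u k) - gradIntegral μ g Ω u =
      k ^ Module.finrank ℝ E *
        ∫ x in dilationSet Ω u k, (g (fderiv ℝ u x) - g (fderiv ℝ u (k • x))) ∂μ := by
  have hk0 : 0 < k := zero_lt_one.trans_le hk
  have hsub : k • dilationSet Ω u k ⊆ Ω := by
    rintro _ ⟨x, hx, rfl⟩
    exact hx.2.1
  have hscale := Measure.setIntegral_comp_smul_of_pos μ
    (fun y => g (fderiv ℝ (dilateSup u k) y) - g (fderiv ℝ u y)) (dilationSet Ω u k) hk0
  rw [← neg_sub, gradIntegral_sub_eq_setIntegral hΩ hg hK (convexOn_dilateSup hu h0 hk) hu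
    (fun x _ => le_max_left _ _) hsub
    fun x hx hxk => (dilateSup_eq_of_notMem hu.1 h0 hk hx hxk).symm, ← integral_neg]
  simp only [neg_sub]
  rw [smul_eq_mul, eq_inv_mul_iff_mul_eq₀ (by positivity)] at hscale
  rw [← hscale]
  congr 1
  refine setIntegral_congr_fun hopen.measurableSet fun x hx => ?_
  simp only [fderiv_dilateSup_smul hopen hk0.ne' hx]

end EnergyComparison

section DilationEstimate

lemma setIntegral_sub_le_of_subset_of_subset {α : Type*} [MeasurableSpace α] {μ : Measure α}
    {B S ω : Set α} {v v' w : α → ℝ} {η : ℝ} (hωm : MeasurableSet ω) (hSm : MeasurableSet S)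
    (hBm : MeasurableSet B) (hBS : B ⊆ S) (hSω : S ⊆ ω) (hω : μ ω ≠ ⊤) (hv : IntegrableOn v ω μ)
    (hv' : IntegrableOn v' ω μ) (hw : IntegrableOn w ω μ)
    (hclose : ∀ᵐ x ∂μ, x ∈ ω → x ∉ B → w x ≤ v x + η ∧ w x ≤ v' x + η)
    (htest : 0 ≤ ∫ x in S, (v x - v' x) ∂μ) :
    ∫ x in ω, (w x - v x) ∂μ ≤
      ∫ x in B, (w x - v' x) ∂μ + (∫ _ in ω, η ∂μ - ∫ _ in B, η ∂μ) := by
  have hwv : IntegrableOn (fun x => w x - v x) ω μ := hw.sub hv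
  have hwv' : IntegrableOn (fun x => w x - v' x) ω μ := hw.sub hv'
  have hη : IntegrableOn (fun _ => η) ω μ := integrableOn_const hω
  have hout : ∫ x in ω \ S, (w x - v x) ∂μ ≤ ∫ _ in ω \ S, η ∂μ := by
    refine setIntegral_mono_on_ae (hwv.mono_set sdiff_subset) (hη.mono_set sdiff_subset)
      (hωm.diff hSm) ?_
    filter_upwards [hclose] with x hx hxS
    linarith [(hx hxS.1 fun hB => hxS.2 (hBS hB)).1]
  have hin : ∫ x in S \ B, (w x - v' x) ∂μ ≤ ∫ _ in S \ B, η ∂μ := by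
    refine setIntegral_mono_on_ae (hwv'.mono_set (sdiff_subset.trans hSω))
      (hη.mono_set (sdiff_subset.trans hSω)) (hSm.diff hBm) ?_
    filter_upwards [hclose] with x hx hxB
    linarith [(hx (hSω hxB.1) hxB.2).2]
  have hS : ∫ x in S, (w x - v' x) ∂μ - ∫ x in S, (w x - v x) ∂μ =
      ∫ x in S, (v x - v' x) ∂μ := by
    rw [← integral_sub (hwv'.mono_set hSω) (hwv.mono_set hSω)]
    simp only [sub_sub_sub_cancel_left]
  rw [setIntegral_sdiff hSm hwv hSω, setIntegral_sdiff hSm hη hSω] at hout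
  rw [setIntegral_sdiff hBm (hwv'.mono_set hSω) hBS,
    setIntegral_sdiff hBm (hη.mono_set hSω) hBS] at hin
  linarith

variable {E : Type*} [NormedAddCommGroup E] [NormedSpace ℝ E]

lemma exists_forall_smul_le_add_of_continuousOn [ProperSpace E] {v : E → ℝ} {ρ η : ℝ} (hρ : 0 < ρ)
    (hv : ContinuousOn v (ball 0 (2 * ρ))) (hη : 0 < η) :
    ∃ k ∈ Ioo (1 : ℝ) 2, ∀ x ∈ ball (0 : E) ρ, ∀ r ∈ Icc 1 k, ∀ s ∈ Icc 1 k,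
      v (r • x) ≤ v (s • x) + η := by
  have hunif : UniformContinuousOn v (closedBall 0 (3 / 2 * ρ)) :=
    (isCompact_closedBall _ _).uniformContinuousOn_of_continuous
      (hv.mono (closedBall_subset_ball (by linarith)))
  obtain ⟨δ, hδ, hclose⟩ := Metric.uniformContinuousOn_iff.1 hunif η hη
  obtain ⟨k, hk1, hk⟩ := exists_between
    (lt_min (by norm_num : (1 : ℝ) < 3 / 2) (lt_add_of_pos_right 1 (div_pos hδ hρ)))
  obtain ⟨hk2, hkδ⟩ := lt_min_iff.1 hk
  rw [← sub_lt_iff_lt_add', lt_div_iff₀ hρ] at hkδ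
  refine ⟨k, ⟨hk1, by linarith⟩, fun x hx r hr s hs => ?_⟩
  rw [mem_ball_zero_iff] at hx
  have hmem : ∀ t ∈ Icc 1 k, t • x ∈ closedBall (0 : E) (3 / 2 * ρ) := fun t ht => by
    rw [mem_closedBall_zero_iff, norm_smul, Real.norm_of_nonneg (zero_le_one.trans ht.1)]
    exact mul_le_mul (ht.2.trans hk2.le) hx.le (norm_nonneg x) (by norm_num)
  have hdist : dist (r • x) (s • x) < δ := by
    rw [dist_eq_norm, ← sub_smul, norm_smul, Real.norm_eq_abs]
    have hrs : |r - s| ≤ k - 1 := by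
      rw [abs_le]
      constructor <;> linarith [hr.1, hr.2, hs.1, hs.2]
    exact (mul_le_mul hrs hx.le (norm_nonneg x) (by linarith)).trans_lt hkδ
  have := (le_abs_self _).trans_lt (hclose _ (hmem r hr) _ (hmem s hs) hdist)
  linarith

variable [FiniteDimensional ℝ E] [MeasurableSpace E] [BorelSpace E] {μ : Measure E}
  [μ.IsAddHaarMeasure] {ω S : Set E} {v w : E → ℝ} {k η : ℝ}

lemma pow_finrank_mul_setIntegral_preimage_smul (hk : 0 < k) (h : E → ℝ) (ω : Set E) :
    k ^ Module.finrank ℝ E * ∫ x in (fun x => k • x) ⁻¹' ω, h (k • x) ∂μ = ∫ x in ω, h x ∂μ := by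
  rw [Measure.setIntegral_comp_smul_of_pos μ h _ hk, preimage_smul₀ hk.ne', smul_inv_smul₀ hk.ne',
    smul_eq_mul, mul_inv_cancel_left₀ (by positivity)]

/-- By homogeneity of `w`, the integral of `w x - v (k • x)` over `k⁻¹ • ω` is `k⁻ⁿ` times that of
`w - v` over `ω`, so it can be absorbed. -/
lemma setIntegral_sub_le_mul_measureReal [Nontrivial E] (hk : 1 < k) (hωm : MeasurableSet ω)
    (hSm : MeasurableSet S) (hBS : (fun x => k • x) ⁻¹' ω ⊆ S) (hSω : S ⊆ ω) (hω : μ ω ≠ ⊤)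
    (hv : IntegrableOn v ω μ) (hvk : IntegrableOn (fun x => v (k • x)) ω μ)
    (hw : IntegrableOn w ω μ) (hhom : ∀ x, k • x ∈ ω → w (k • x) = w x)
    (hclose : ∀ᵐ x ∂μ, x ∈ ω → k • x ∉ ω → w x ≤ v x + η ∧ w x ≤ v (k • x) + η)
    (htest : 0 ≤ ∫ x in S, (v x - v (k • x)) ∂μ) :
    ∫ x in ω, (w x - v x) ∂μ ≤ η * μ.real ω := by
  have hk0 : 0 < k := zero_lt_one.trans hk
  have hBm : MeasurableSet ((fun x => k • x) ⁻¹' ω) := hωm.preimage (measurable_const_smul k)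
  have hscale : k ^ Module.finrank ℝ E *
      ∫ x in (fun x => k • x) ⁻¹' ω, (w x - v (k • x)) ∂μ = ∫ x in ω, (w x - v x) ∂μ := by
    rw [← pow_finrank_mul_setIntegral_preimage_smul hk0 _ ω]
    congr 1
    exact setIntegral_congr_fun hBm fun x hx => by simp only [hhom x hx]
  have hscaleη : k ^ Module.finrank ℝ E * ∫ _ in (fun x => k • x) ⁻¹' ω, η ∂μ = ∫ _ in ω, η ∂μ :=
    pow_finrank_mul_setIntegral_preimage_smul hk0 (fun _ => η) ω
  have hpow : 1 < k ^ Module.finrank ℝ E := one_lt_pow₀ hk Module.finrank_pos.ne'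
  have hle := mul_le_mul_of_nonneg_left
    (setIntegral_sub_le_of_subset_of_subset hωm hSm hBm hBS hSω hω hv hvk hw hclose htest)
    (zero_le_one.trans hpow.le)
  rw [mul_add, mul_sub, hscale, hscaleη] at hle
  have hcancel : (k ^ Module.finrank ℝ E - 1) * ∫ x in ω, (w x - v x) ∂μ ≤
      (k ^ Module.finrank ℝ E - 1) * ∫ _ in ω, η ∂μ := by linarith
  calc ∫ x in ω, (w x - v x) ∂μ ≤ ∫ _ in ω, η ∂μ :=
        le_of_mul_le_mul_left hcancel (sub_pos.2 hpow)
    _ = η * μ.real ω := by rw [setIntegral_const, smul_eq_mul, mul_comm]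

end DilationEstimate

section StretchingTheNose

variable {E : Type*} [NormedAddCommGroup E] [NormedSpace ℝ E] [FiniteDimensional ℝ E]
  [Nontrivial E] [MeasurableSpace E] [BorelSpace E] {μ : Measure E} [μ.IsAddHaarMeasure]
  {Ω : Set E} {u : E → ℝ} {g : (E →L[ℝ] ℝ) → ℝ} {a b K ρ : ℝ}

lemma setIntegral_dilationSet_nonneg {k : ℝ} (hΩ : IsCompact Ω) (hg : Continuous g)
    (hK : ∀ ξ, |g ξ| ≤ K) (hu : u ∈ convexBetween Ω a b) (hρ : 0 < ρ)
    (hball : ball 0 (2 * ρ) ⊆ Ω) (hnose : noseSet Ω u ⊆ ball 0 ρ)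
    (hmin : IsMinOn (gradIntegral μ g Ω) (convexBetween Ω a b) u) (hk : 1 < k) (hk2 : k < 2) :
    0 ≤ ∫ x in dilationSet Ω u k, (g (fderiv ℝ u x) - g (fderiv ℝ u (k • x))) ∂μ := by
  have h0 : (0 : E) ∈ Ω := hball (mem_ball_self (by positivity))
  refine nonneg_of_mul_nonneg_right ?_ (pow_pos (zero_lt_one.trans hk) (Module.finrank ℝ E))
  rw [← gradIntegral_dilateSup_sub hΩ hg hK hu.1 h0 hk.le
    (isOpen_dilationSet hu.1 hρ hball hnose hk hk2.le), sub_nonneg]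
  exact hmin (dilateSup_mem_convexBetween hu hρ hball hnose hk hk2)

lemma gradIntegral_noseHull_sub_le {η : ℝ} (hΩ : IsCompact Ω) (hg : Continuous g)
    (hK : ∀ ξ, |g ξ| ≤ K) (hu : u ∈ convexBetween Ω a b) (ha : a ≤ 0) (hρ : 0 < ρ)
    (hball : ball 0 (2 * ρ) ⊆ Ω) (hnose : noseSet Ω u ⊆ ball 0 ρ)
    (hsmooth : ContDiffOn ℝ 1 u (ball 0 (2 * ρ)))
    (hmin : IsMinOn (gradIntegral μ g Ω) (convexBetween Ω a b) u) (hη : 0 < η) :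
    gradIntegral μ g Ω (noseHull Ω u) - gradIntegral μ g Ω u ≤ η * μ.real (noseSet Ω u) := by
  have h0 : (0 : E) ∈ Ω := hball (mem_ball_self (by positivity))
  have hau : ∀ y ∈ Ω, a ≤ u y := fun y hy => (hu.2 y hy).1
  have hcontg : ContinuousOn (fun x => g (fderiv ℝ u x)) (ball 0 (2 * ρ)) :=
    hg.comp_continuousOn (hsmooth.continuousOn_fderiv_of_isOpen isOpen_ball le_rfl)
  obtain ⟨k, ⟨hk, hk2⟩, hosc⟩ := exists_forall_smul_le_add_of_continuousOn hρ hcontg hη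
  have hsubΩ : noseSet Ω u ⊆ Ω := fun x ⟨_, _, hx⟩ => hx.1
  have hfin : μ (noseSet Ω u) < ⊤ := (measure_mono hsubΩ).trans_lt hΩ.measure_lt_top
  have hopen : IsOpen (noseSet Ω u) := isOpen_noseSet hu.1 hρ hball hnose
  have hopenk : IsOpen (dilationSet Ω u k) := isOpen_dilationSet hu.1 hρ hball hnose hk hk2.le
  have hconv : ConvexOn ℝ Ω (noseHull Ω u) := convexOn_noseHull hu.1 ha hau
  rw [gradIntegral_sub_eq_setIntegral hΩ hg hK hu.1 hconv (fun x => noseHull_le ha hau) hsubΩ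
    fun x => noseHull_eq_of_notMem ha hau]
  refine setIntegral_sub_le_mul_measureReal hk hopen.measurableSet hopenk.measurableSet
    (fun x hx => mem_dilationSet_of_smul_mem_noseSet hu.1 h0 hk hx) (fun x hx => ⟨k, hk, hx⟩)
    hfin.ne (integrableOn_comp_fderiv hg hK u hfin) ?_ (integrableOn_comp_fderiv hg hK _ hfin)
    (fun x hx => by rw [fderiv_noseHull_smul hu.1 h0 ha hau hopen hk hx]) ?_
    (setIntegral_dilationSet_nonneg hΩ hg hK hu hρ hball hnose hmin hk hk2)
  · exact .of_bound hfin ((measurable_comp_fderiv hg u).comp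
      (measurable_const_smul k)).aestronglyMeasurable K (.of_forall fun _ => hK _)
  filter_upwards [ae_differentiableAt_of_convexOn μ hconv] with x hdx hx hkx
  have hray : ∀ s ∈ Icc 1 k, s • x ∈ ball (0 : E) (2 * ρ) := fun s hs =>
    smul_mem_ball_two_mul (hnose hx) (zero_le_one.trans hs.1) (hs.2.trans hk2.le)
  obtain ⟨r, hr, hrx⟩ := exists_fderiv_noseHull_eq ha hau hk.le
    (fun s hs => interior_maximal hball isOpen_ball (hray s hs))
    (fun s hs => (hsmooth.differentiableOn one_ne_zero).differentiableAt
      (isOpen_ball.mem_nhds (hray s hs))) hkx (hdx (hsubΩ hx))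
  have hosc1 := hosc x (hnose hx) r hr 1 ⟨le_rfl, hk.le⟩
  rw [one_smul] at hosc1
  exact ⟨hrx ▸ hosc1, hrx ▸ hosc x (hnose hx) r hr k ⟨hk.le, le_rfl⟩⟩

theorem gradIntegral_noseHull_le (hΩ : IsCompact Ω) (hg : Continuous g)
    (hK : ∀ ξ, |g ξ| ≤ K) (hu : u ∈ convexBetween Ω a b) (ha : a ≤ 0) (hρ : 0 < ρ)
    (hball : ball 0 (2 * ρ) ⊆ Ω) (hnose : noseSet Ω u ⊆ ball 0 ρ)
    (hsmooth : ContDiffOn ℝ 1 u (ball 0 (2 * ρ)))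
    (hmin : IsMinOn (gradIntegral μ g Ω) (convexBetween Ω a b) u) :
    gradIntegral μ g Ω (noseHull Ω u) ≤ gradIntegral μ g Ω u := by
  have hlim : Tendsto (fun η => η * μ.real (noseSet Ω u)) (𝓝[>] 0) (𝓝 0) :=
    ((continuous_mul_const _).tendsto' 0 0 (zero_mul _)).mono_left nhdsWithin_le_nhds
  refine sub_nonpos.1 (ge_of_tendsto hlim ?_)
  filter_upwards [self_mem_nhdsWithin] with η hη
  exact gradIntegral_noseHull_sub_le hΩ hg hK hu ha hρ hball hnose hsmooth hmin hη

end StretchingTheNose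

section Translation

lemma setIntegral_preimage_add_left {G : Type*} [AddGroup G] [MeasurableSpace G] [MeasurableAdd G]
    {μ : Measure G} [μ.IsAddLeftInvariant] (p : G) (s : Set G) (f : G → ℝ) :
    ∫ y in (p + ·) ⁻¹' s, f (p + y) ∂μ = ∫ x in s, f x ∂μ :=
  (measurePreserving_add_left μ p).setIntegral_preimage_emb (measurableEmbedding_addLeft p) f s

variable {E : Type*} [NormedAddCommGroup E] {Ω : Set E} {u v : E → ℝ} {p : E} {a b z : ℝ}

/-- The function whose graph is the graph of `u` moved by `(-p, -z)`: it brings the point `(p, z)`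
to the origin, the centre of the dilations above. If `u` is defined on `Ω`, then `recenter p z u`
is defined on `(p + ·) ⁻¹' Ω`. -/
def recenter (p : E) (z : ℝ) (u : E → ℝ) (y : E) : ℝ :=
  u (p + y) - z

lemma integral_recenter [MeasurableSpace E] [BorelSpace E] {μ : Measure E}
    [μ.IsAddLeftInvariant] [IsFiniteMeasureOnCompacts μ] (hΩ : IsCompact Ω)
    (hu : IntegrableOn u Ω μ) :
    ∫ y in (p + ·) ⁻¹' Ω, recenter p z u y ∂μ = ∫ x in Ω, u x ∂μ - μ.real Ω * z := by
  rw [← smul_eq_mul, ← setIntegral_const,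
    ← integral_sub hu (integrableOn_const hΩ.measure_ne_top)]
  exact setIntegral_preimage_add_left p Ω fun x => u x - z

variable [NormedSpace ℝ E]

lemma recenter_mem_convexBetween (p : E) (z : ℝ) (hu : u ∈ convexBetween Ω a b) :
    recenter p z u ∈ convexBetween ((p + ·) ⁻¹' Ω) (a - z) (b - z) :=
  ⟨(hu.1.translate_right p).add_const (-z), fun _ hy => ⟨sub_le_sub_right (hu.2 _ hy).1 z,
    sub_le_sub_right (hu.2 _ hy).2 z⟩⟩

lemma exists_recenter_eq_of_mem_convexBetween
    (hv : v ∈ convexBetween ((p + ·) ⁻¹' Ω) (a - z) (b - z)) :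
    ∃ w ∈ convexBetween Ω a b, recenter p z w = v := by
  refine ⟨recenter (-p) (-z) v, ?_, ?_⟩
  · simpa only [preimage_preimage, add_neg_cancel_left, preimage_id', sub_neg_eq_add,
      sub_add_cancel] using recenter_mem_convexBetween (-p) (-z) hv
  · funext y
    simp only [recenter, neg_add_cancel_left, sub_neg_eq_add, add_sub_cancel_right]

variable [MeasurableSpace E] [BorelSpace E] {μ : Measure E} [μ.IsAddLeftInvariant]
  {g : (E →L[ℝ] ℝ) → ℝ}

lemma gradIntegral_recenter :
    gradIntegral μ g ((p + ·) ⁻¹' Ω) (recenter p z u) = gradIntegral μ g Ω u := by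
  have hfderiv : ∀ y, fderiv ℝ (recenter p z u) y = fderiv ℝ u (p + y) := fun y =>
    (fderiv_sub_const z).trans (fderiv_comp_add_left p)
  simp only [gradIntegral, hfderiv]
  exact setIntegral_preimage_add_left p Ω fun x => g (fderiv ℝ u x)

end Translation

section LexMinimizer

lemma setIntegral_lt_setIntegral_of_isOpen {X : Type*} [TopologicalSpace X] [MeasurableSpace X]
    {μ : Measure X} [μ.IsOpenPosMeasure] {Ω O : Set X} {u v : X → ℝ} (hΩ : MeasurableSet Ω)
    (hu : IntegrableOn u Ω μ) (hv : IntegrableOn v Ω μ) (hle : ∀ x ∈ Ω, v x ≤ u x)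
    (hO : IsOpen O) (hne : O.Nonempty) (hlt : ∀ x ∈ O, x ∈ Ω ∧ v x < u x) :
    ∫ x in Ω, v x ∂μ < ∫ x in Ω, u x ∂μ := by
  rw [← sub_pos, ← integral_sub hu hv, setIntegral_pos_iff_support_of_nonneg_ae
    ((ae_restrict_iff' hΩ).2 (.of_forall fun x hx => sub_nonneg.2 (hle x hx))) (hu.sub hv)]
  exact (hO.measure_pos μ hne).trans_le
    (measure_mono fun x hx => ⟨(sub_pos.2 (hlt x hx).2).ne', (hlt x hx).1⟩)

variable {E : Type*} [NormedAddCommGroup E] [NormedSpace ℝ E] {Ω U : Set E} {u : E → ℝ}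
  {g : (E →L[ℝ] ℝ) → ℝ} {a b K ρ : ℝ} {x₀ : E}

lemma noseHull_mem_convexBetween (hu : u ∈ convexBetween Ω a b) (ha : a ≤ 0) :
    noseHull Ω u ∈ convexBetween Ω a b := by
  have hau : ∀ y ∈ Ω, a ≤ u y := fun y hy => (hu.2 y hy).1
  exact ⟨convexOn_noseHull hu.1 ha hau, fun x hx =>
    ⟨le_noseHull hx fun _ hs hsx => le_div_of_le_of_nonpos ha hau hs hsx,
      (noseHull_le ha hau hx).trans (hu.2 x hx).2⟩⟩

variable [MeasurableSpace E] {μ : Measure E}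

lemma isMinOn_gradIntegral_of_isMinOn_lexEnergy
    (hmin : IsMinOn (lexEnergy μ g Ω) (convexBetween Ω a b) u) :
    IsMinOn (gradIntegral μ g Ω) (convexBetween Ω a b) u :=
  fun _ hv => (Prod.Lex.le_iff'.1 (hmin hv)).1

variable [BorelSpace E] [FiniteDimensional ℝ E] [μ.IsAddHaarMeasure]

lemma integral_noseHull_lt (hΩ : IsCompact Ω) (hu : u ∈ convexBetween Ω a b) (ha : a ≤ 0)
    (hρ : 0 < ρ) (hball : ball 0 (2 * ρ) ⊆ Ω) (hnose : noseSet Ω u ⊆ ball 0 ρ) (hu0 : 0 < u 0) :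
    ∫ x in Ω, noseHull Ω u x ∂μ < ∫ x in Ω, u x ∂μ := by
  have hau : ∀ y ∈ Ω, a ≤ u y := fun y hy => (hu.2 y hy).1
  have h0 : (0 : E) ∈ Ω := hball (mem_ball_self (by positivity))
  have h0nose : (0 : E) ∈ noseSet Ω u :=
    ⟨2, one_lt_two, h0, by rwa [smul_zero], by rw [smul_zero]; linarith⟩
  exact setIntegral_lt_setIntegral_of_isOpen hΩ.measurableSet
    (integrableOn_of_mem_convexBetween hΩ hu)
    (integrableOn_of_mem_convexBetween hΩ (noseHull_mem_convexBetween hu ha))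
    (fun x => noseHull_le ha hau) (isOpen_noseSet hu.1 hρ hball hnose) ⟨0, h0nose⟩
    fun x hx => ⟨hx.choose_spec.2.1, noseHull_lt ha hau hx⟩

lemma not_isMinOn_lexEnergy_of_noseSet_subset_ball [Nontrivial E] (hΩ : IsCompact Ω)
    (hg : Continuous g) (hK : ∀ ξ, |g ξ| ≤ K) (hu : u ∈ convexBetween Ω a b) (ha : a ≤ 0)
    (hρ : 0 < ρ) (hball : ball 0 (2 * ρ) ⊆ Ω) (hnose : noseSet Ω u ⊆ ball 0 ρ)
    (hsmooth : ContDiffOn ℝ 1 u (ball 0 (2 * ρ))) (hu0 : 0 < u 0) :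
    ¬ IsMinOn (lexEnergy μ g Ω) (convexBetween Ω a b) u := by
  intro hmin
  have hgrad : gradIntegral μ g Ω (noseHull Ω u) ≤ gradIntegral μ g Ω u :=
    gradIntegral_noseHull_le hΩ hg hK hu ha hρ hball hnose hsmooth
      (isMinOn_gradIntegral_of_isMinOn_lexEnergy hmin)
  have hlt : ∫ x in Ω, noseHull Ω u x ∂μ < ∫ x in Ω, u x ∂μ :=
    integral_noseHull_lt hΩ hu ha hρ hball hnose hu0
  rcases Prod.Lex.toLex_le_toLex.1 (hmin (noseHull_mem_convexBetween hu ha)) with h | h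
  · exact h.not_ge hgrad
  · exact h.2.not_gt hlt

lemma isMinOn_lexEnergy_recenter (p : E) (z : ℝ) (hΩ : IsCompact Ω) (hu : u ∈ convexBetween Ω a b)
    (hmin : IsMinOn (lexEnergy μ g Ω) (convexBetween Ω a b) u) :
    IsMinOn (lexEnergy μ g ((p + ·) ⁻¹' Ω))
      (convexBetween ((p + ·) ⁻¹' Ω) (a - z) (b - z)) (recenter p z u) := by
  intro v hv
  obtain ⟨w, hw, rfl⟩ := exists_recenter_eq_of_mem_convexBetween hv
  simpa only [mem_ofPred_eq, lexEnergy, gradIntegral_recenter, integral_recenter hΩ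
    (integrableOn_of_mem_convexBetween hΩ hu), integral_recenter hΩ
    (integrableOn_of_mem_convexBetween hΩ hw), Prod.Lex.toLex_le_toLex, sub_le_sub_iff_right]
    using hmin hw

lemma not_isMinOn_lexEnergy_of_strict_support [Nontrivial E] {l : E →L[ℝ] ℝ} (hΩ : IsCompact Ω)
    (hg : Continuous g) (hK : ∀ ξ, |g ξ| ≤ K) (hu : u ∈ convexBetween Ω a b) (hρ : 0 < ρ)
    (hball : ball x₀ (2 * ρ) ⊆ Ω) (hsmooth : ContDiffOn ℝ 1 u (ball x₀ (2 * ρ)))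
    (hax₀ : a < u x₀) (hl : ∀ y ∈ Ω, y ≠ x₀ → u x₀ + l (y - x₀) < u y) :
    ¬ IsMinOn (lexEnergy μ g Ω) (convexBetween Ω a b) u := by
  intro hmin
  have hpreball : (x₀ + ·) ⁻¹' ball x₀ (2 * ρ) = ball 0 (2 * ρ) := by
    rw [preimage_add_ball, sub_self]
  have hball₀ : ball 0 (2 * ρ) ⊆ (x₀ + ·) ⁻¹' Ω := hpreball ▸ preimage_mono hball
  have hsmooth₀ : ContDiffOn ℝ 1 (fun y => u (x₀ + y)) (ball 0 (2 * ρ)) :=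
    hsmooth.comp (by fun_prop) hpreball.ge
  have hdiff : DifferentiableAt ℝ (fun y => u (x₀ + y)) 0 :=
    (hsmooth₀.differentiableOn one_ne_zero).differentiableAt (ball_mem_nhds 0 (by positivity))
  obtain ⟨ε₀, hε₀, hnose⟩ := exists_noseSet_subset_ball_of_strict_support (l := l)
    (hu.1.translate_right x₀) hdiff hρ
    ((closedBall_subset_ball (by linarith)).trans (interior_maximal hball₀ isOpen_ball))
    fun y hy hy0 => by
      simpa only [add_zero, add_sub_cancel_left, Function.comp_apply] using
        hl (x₀ + y) hy (add_ne_left.2 hy0)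
  obtain ⟨ε, hε, hlt⟩ := exists_between (lt_min hε₀ (sub_pos.2 hax₀))
  obtain ⟨hεε₀, hεa⟩ := lt_min_iff.1 hlt
  have hrecenter : recenter x₀ (u x₀ - ε) u = fun y => u (x₀ + y) - u (x₀ + 0) + ε := by
    funext y
    simp only [recenter, add_zero, sub_sub_eq_add_sub, sub_add_eq_add_sub]
  refine not_isMinOn_lexEnergy_of_noseSet_subset_ball
    ((Homeomorph.addLeft x₀).isClosedEmbedding.isCompact_preimage hΩ) hg hK
    (recenter_mem_convexBetween x₀ (u x₀ - ε) hu) (by linarith) hρ hball₀ ?_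
    (hsmooth₀.sub contDiffOn_const) ?_ (isMinOn_lexEnergy_recenter x₀ (u x₀ - ε) hΩ hu hmin)
  · exact hrecenter ▸ hnose ε ⟨hε, hεε₀⟩
  · simpa only [recenter, add_zero, sub_sub_cancel] using hε

lemma not_isMinOn_lexEnergy_of_mem_extremePoints [Nontrivial E] (hΩ : IsCompact Ω)
    (hg : Continuous g) (hK : ∀ ξ, |g ξ| ≤ K) (hu : u ∈ convexBetween Ω a b) (hU : IsOpen U)
    (hUΩ : U ⊆ interior Ω) (hsmooth : ContDiffOn ℝ 1 u U) (haU : ∀ x ∈ U, a < u x) (hx₀ : x₀ ∈ U)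
    (hext : (x₀, u x₀) ∈ extremePoints ℝ {p : E × ℝ | p.1 ∈ Ω ∧ u p.1 ≤ p.2}) :
    ¬ IsMinOn (lexEnergy μ g Ω) (convexBetween Ω a b) u := by
  obtain ⟨r, hr, hrU⟩ := nhds_basis_closedBall.mem_iff.1 (hU.mem_nhds hx₀)
  obtain ⟨x₁, hx₁, l, hl⟩ :=
    exists_strict_support_of_mem_extremePoints hu.1 hr (hrU.trans hUΩ) hext
  have hx₁U : x₁ ∈ U := hrU (ball_subset_closedBall hx₁)
  obtain ⟨ρ, hρ, hρU⟩ := Metric.isOpen_iff.1 hU x₁ hx₁U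
  rw [← mul_div_cancel₀ ρ two_ne_zero] at hρU
  exact not_isMinOn_lexEnergy_of_strict_support hΩ hg hK hu (half_pos hρ)
    (hρU.trans (hUΩ.trans interior_subset)) (hsmooth.mono hρU) (haU x₁ hx₁U) hl

theorem statement1_general [Nontrivial E] (μ : Measure E) [μ.IsAddHaarMeasure]
    (hΩ : IsCompact Ω) (hΩconv : Convex ℝ Ω) (hab : a ≤ b) (hg : Continuous g)
    (hK : ∀ ξ, |g ξ| ≤ K) :
    ∃ u ∈ convexBetween Ω a b, IsMinOn (gradIntegral μ g Ω) (convexBetween Ω a b) u ∧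
      ∀ U : Set E, IsOpen U → U ⊆ interior Ω → ContDiffOn ℝ 1 u U → (∀ x ∈ U, a < u x) →
        ∀ x ∈ U, (x, u x) ∉ extremePoints ℝ {p : E × ℝ | p.1 ∈ Ω ∧ u p.1 ≤ p.2} := by
  obtain ⟨u, hu, hmin⟩ :=
    exists_isMinOn_lexEnergy (μ := μ) hΩ hΩconv hab hg hK
  exact ⟨u, hu, isMinOn_gradIntegral_of_isMinOn_lexEnergy hmin,
    fun U hU hUΩ hsmooth haU x hx hext =>
      not_isMinOn_lexEnergy_of_mem_extremePoints hΩ hg hK hu hU hUΩ hsmooth haU hx hext hmin⟩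

end LexMinimizer

end

/-- For bounded continuous `f` there is a minimizer `u` of `F` in `𝒞_M`
such that on any open set `U ⊆ int Ω` where `u` is `C¹` and positive, the graph of `u`
contains no extreme points of `epi(u)`. -/
theorem statement1
    (Ω : Set (ℝ × ℝ)) (hΩc : IsCompact Ω) (hΩconv : Convex ℝ Ω)
    (hΩint : (interior Ω).Nonempty) (M : ℝ) (hM : 0 < M)
    (f : ℝ × ℝ → ℝ) (hf : Continuous f) (hbd : ∃ K : ℝ, ∀ ξ : ℝ × ℝ, |f ξ| ≤ K) :
    ∃ u : ℝ × ℝ → ℝ, Minimizes f Ω M u ∧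
      ∀ U : Set (ℝ × ℝ), IsOpen U → U ⊆ interior Ω →
        ContDiffOn ℝ 1 u U → (∀ x ∈ U, 0 < u x) →
        ∀ x ∈ U, (x, u x) ∉ Set.extremePoints ℝ (epi Ω u) := by
  obtain ⟨K, hK⟩ := hbd
  obtain ⟨u, hu, hmin, hext⟩ := statement1_general volume hΩc hΩconv hM.le
    (g := fun L => f (L (1, 0), L (0, 1))) (by fun_prop) fun _ => hK _
  exact ⟨u, ⟨hu, fun _ hv => hmin hv⟩, hext⟩
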